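/- Let Ω ⊂ ℝ^d be a bounded open set with Lipschitz boundary, let p > d−1, and let W : Ω×ℝ^{m×d} → [0,+∞] satisfy Assumption 1. Let g ∈ C_c^1(ℝ^d)^m satisfy ∫_Ω W(x, s Dg(x)) dx < +∞ for some s > 1. Then for every u ∈ g + W^{1,p}_0(Ω)^m there exists a sequence u_n ∈ g + C_c^∞(Ω)^m such that u_n → u strongly in W^{1,p}(Ω)^m and ∫_Ω W(x, Du_n) dx → ∫_Ω W(x, Du) dx. In particular, inf over g + W^{1,p}_0(Ω)^m of ∫_Ω W(x, Du) dx equals the inf over g + C_c^∞(Ω)^m. -/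

import Mathlib

open MeasureTheory Metric Set Filter
open scoped ENNReal Topology NNReal RealInnerProductSpace

noncomputable section

/-- `ℝ^d` as a Euclidean space. -/
abbrev Euc (d : ℕ) := EuclideanSpace ℝ (Fin d)

/-- The space `ℝ^{m×d}` of `m×d` matrices. -/
abbrev Mat (m d : ℕ) := Fin m → Fin d → ℝ

/-- Frobenius (Euclidean) norm of an `m×d` matrix. -/
def frobNorm {m d : ℕ} (ξ : Mat m d) : ℝ :=
  Real.sqrt (∑ i, ∑ j, ξ i j ^ 2)

/-- `φ ∈ C_c^∞(Ω)^m`: a smooth function with compact support contained in `Ω`. -/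
def IsCcSmooth {d m : ℕ} (Ω : Set (Euc d)) (φ : Euc d → Euc m) : Prop :=
  ContDiff ℝ (⊤ : ℕ∞) φ ∧ HasCompactSupport φ ∧ tsupport φ ⊆ Ω

/-- The (classical) Jacobian matrix of a differentiable map. -/
def smoothJac {d m : ℕ} (φ : Euc d → Euc m) (x : Euc d) : Mat m d :=
  fun i j => fderiv ℝ φ x (EuclideanSpace.single j 1) i

/-- `Du` is the weak Jacobian of `u` on `Ω` (integration by parts against test functions). -/
def IsWeakJacobianOn {d m : ℕ} (Ω : Set (Euc d)) (u : Euc d → Euc m)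
    (Du : Euc d → Mat m d) : Prop :=
  ∀ φ : Euc d → ℝ, ContDiff ℝ (⊤ : ℕ∞) φ → HasCompactSupport φ → tsupport φ ⊆ Ω →
    ∀ (i : Fin m) (j : Fin d),
      ∫ x in Ω, u x i * fderiv ℝ φ x (EuclideanSpace.single j 1) =
        - ∫ x in Ω, Du x i j * φ x

/-- `u ∈ W^{1,p}(Ω)^m` with weak Jacobian `Du`. -/
def MemW1p {d m : ℕ} (Ω : Set (Euc d)) (p : ℝ≥0∞) (u : Euc d → Euc m)
    (Du : Euc d → Mat m d) : Prop :=
  MemLp u p (volume.restrict Ω) ∧ MemLp Du p (volume.restrict Ω) ∧ IsWeakJacobianOn Ω u Du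

/-- Strong convergence `uₙ → v` in `W^{1,p}(Ω)^m` (together with the Jacobians). -/
def TendstoW1p {d m : ℕ} (Ω : Set (Euc d)) (p : ℝ≥0∞)
    (u : ℕ → Euc d → Euc m) (Du : ℕ → Euc d → Mat m d)
    (v : Euc d → Euc m) (Dv : Euc d → Mat m d) : Prop :=
  Tendsto (fun n => eLpNorm (u n - v) p (volume.restrict Ω)) atTop (𝓝 0) ∧
  Tendsto (fun n => eLpNorm (Du n - Dv) p (volume.restrict Ω)) atTop (𝓝 0)

/-- `v ∈ W_0^{1,p}(Ω)^m`, i.e. `v ∈ W^{1,p}` and `v` is a `W^{1,p}`-limit of functions in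
`C_c^∞(Ω)^m`. -/
def MemW1p0 {d m : ℕ} (Ω : Set (Euc d)) (p : ℝ≥0∞) (v : Euc d → Euc m)
    (Dv : Euc d → Mat m d) : Prop :=
  MemW1p Ω p v Dv ∧
  ∃ w : ℕ → Euc d → Euc m, (∀ n, IsCcSmooth Ω (w n)) ∧
    TendstoW1p Ω p w (fun n => smoothJac (w n)) v Dv

/-- `Ω` has Lipschitz boundary: near each boundary point, `Ω` is the subgraph of a Lipschitz
function over a hyperplane. -/
def HasLipschitzBoundary {d : ℕ} (Ω : Set (Euc d)) : Prop :=
  ∀ x ∈ frontier Ω, ∃ (ν : Euc d) (r L : ℝ) (ψ : Euc d → ℝ),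
    ‖ν‖ = 1 ∧ 0 < r ∧ 0 ≤ L ∧ LipschitzWith (Real.toNNReal L) ψ ∧
    ∀ y ∈ ball x r, (y ∈ Ω ↔ ⟪y, ν⟫ < ψ (y - ⟪y, ν⟫ • ν))

/-- Convexity of a `[0,+∞]`-valued function. -/
def ConvexENNReal {m d : ℕ} (f : Mat m d → ℝ≥0∞) : Prop :=
  ∀ ξ η : Mat m d, ∀ t : ℝ, 0 ≤ t → t ≤ 1 →
    f (t • ξ + (1 - t) • η) ≤ ENNReal.ofReal t * f ξ + ENNReal.ofReal (1 - t) * f η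

/-- The convex biconjugate `f**` of a `[0,+∞]`-valued function: the supremum of all affine
minorants of `f`. -/
def biconj {m d : ℕ} (f : Mat m d → ℝ≥0∞) (ξ : Mat m d) : ℝ≥0∞ :=
  ⨆ (L : Mat m d →ₗ[ℝ] ℝ) (c : ℝ) (_ : ∀ η, ENNReal.ofReal (L η + c) ≤ f η),
    ENNReal.ofReal (L ξ + c)

/-- Assumption (a4): the local stability estimate
`W(x,ξ) ≤ C_M (ess inf_{y ∈ B̄_δ(x) ∩ Ω} W(y,·))**(ξ) + α_M(x)` for `|ξ| ≤ M δ^{-d/p}`. -/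
def StabilityEstimate {d m : ℕ} (Ω : Set (Euc d)) (p : ℝ)
    (W : Euc d → Mat m d → ℝ≥0∞) : Prop :=
  ∀ M : ℝ, 1 < M → ∃ (CM δ₀ : ℝ) (αM : Euc d → ℝ≥0∞),
    0 < CM ∧ 0 < δ₀ ∧ (∫⁻ x in Ω, αM x) < ⊤ ∧
    ∀ δ : ℝ, 0 < δ → δ < δ₀ → ∀ x ∈ Ω, ∀ ξ : Mat m d,
      frobNorm ξ ≤ M * δ ^ (-(d : ℝ) / p) →
      W x ξ ≤ ENNReal.ofReal CM *
          biconj (fun η => essInf (fun y => W y η) (volume.restrict (closedBall x δ ∩ Ω))) ξ +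
        αM x

/-- Assumption 1 of the paper (items (a1)–(a4)) for the integrand `W` on `Ω`, with lower
growth exponent `p`. -/
def Assumption1 {d m : ℕ} (Ω : Set (Euc d)) (p : ℝ) (W : Euc d → Mat m d → ℝ≥0∞) : Prop :=
  Measurable (Function.uncurry W) ∧
  (∀ᵐ x ∂volume.restrict Ω, ConvexENNReal (W x) ∧ LowerSemicontinuous (W x)) ∧
  (∀ᵐ x ∂volume.restrict Ω, ∀ ξ, ENNReal.ofReal (frobNorm ξ ^ p) ≤ W x ξ) ∧
  ((p ≤ (d : ℝ) - 1 →
      ∃ (C q : ℝ) (α : Euc d → ℝ≥0∞), 0 < C ∧ p < q ∧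
        (p < (d : ℝ) - 1 → q ≤ ((d : ℝ) - 1) * p / ((d : ℝ) - 1 - p)) ∧
        (∫⁻ x in Ω, α x) < ⊤ ∧
        ∀ᵐ x ∂volume.restrict Ω, ∀ ξ,
          W x ξ ≤ ENNReal.ofReal (C * frobNorm ξ ^ q) + α x) ∧
    ((d : ℝ) - 1 < p →
      ∃ θ : ℝ, 0 < θ ∧
        (∫⁻ x in Ω, ⨆ ξ ∈ {ξ : Mat m d | frobNorm ξ ≤ θ}, W x ξ) < ⊤)) ∧
  StabilityEstimate Ω p W


lemma st_deriv_zero {x : ℝ} (hx : x ∉ Icc (0:ℝ) 1) : deriv Real.smoothTransition x = 0 := by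
  by_cases h : x < 0
  · have : Real.smoothTransition =ᶠ[𝓝 x] fun _ => (0:ℝ) := by
      filter_upwards [Iio_mem_nhds h] with y hy
      exact Real.smoothTransition.zero_of_nonpos (le_of_lt hy)
    rw [this.deriv_eq]; simp
  · have h1 : 1 < x := by
      by_contra h2
      exact hx ⟨not_lt.mp h, not_lt.mp h2⟩
    have : Real.smoothTransition =ᶠ[𝓝 x] fun _ => (1:ℝ) := by
      filter_upwards [Ioi_mem_nhds h1] with y hy
      exact Real.smoothTransition.one_of_one_le (le_of_lt hy)
    rw [this.deriv_eq]; simp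

lemma st_deriv_bound : ∃ D : ℝ, 0 ≤ D ∧ ∀ x, |deriv Real.smoothTransition x| ≤ D := by
  have hc : Continuous (deriv Real.smoothTransition) :=
    (Real.smoothTransition.contDiff (n := 1)).continuous_deriv le_rfl
  obtain ⟨D, hD⟩ := (isCompact_Icc (a := (0:ℝ)) (b := 1)).exists_bound_of_continuousOn
    hc.continuousOn
  refine ⟨D, (norm_nonneg _).trans (hD 0 (by simp)), fun x => ?_⟩
  by_cases hx : x ∈ Icc (0:ℝ) 1
  · exact hD x hx
  · rw [st_deriv_zero hx, abs_zero]
    exact (norm_nonneg _).trans (hD 0 (by simp))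

/-- the one-dimensional profile -/
def prof (a w : ℝ) (good : Finset ℕ) (s : ℝ) : ℝ :=
  1 - (∑ k ∈ good, Real.smoothTransition ((s - (a + (3 * k + 1) * w)) / w)) / good.card

lemma prof_contDiff (a w : ℝ) (good : Finset ℕ) :
    ContDiff ℝ (⊤ : ℕ∞) (prof a w good) := by
  unfold prof
  refine contDiff_const.sub (ContDiff.div_const (ContDiff.sum fun k _ => ?_) _)
  exact (Real.smoothTransition.contDiff (n := ⊤)).comp
    (ContDiff.div_const (contDiff_id.sub contDiff_const) _)

lemma prof_hasDeriv (a w : ℝ) (good : Finset ℕ) (s : ℝ) :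
    HasDerivAt (prof a w good)
      (-((∑ k ∈ good, deriv Real.smoothTransition ((s - (a + (3 * k + 1) * w)) / w) * (1 / w))
        / good.card)) s := by
  unfold prof
  have h : ∀ k ∈ good, HasDerivAt
      (fun s => Real.smoothTransition ((s - (a + (3 * (k:ℝ) + 1) * w)) / w))
      (deriv Real.smoothTransition ((s - (a + (3 * k + 1) * w)) / w) * (1 / w)) s := by
    intro k _
    have h1 : HasDerivAt Real.smoothTransition
        (deriv Real.smoothTransition ((s - (a + (3 * k + 1) * w)) / w))
        ((s - (a + (3 * k + 1) * w)) / w) :=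
      ((Real.smoothTransition.contDiff (n := 1)).differentiable (by simp) _).hasDerivAt
    have h2 : HasDerivAt (fun s : ℝ => (s - (a + (3 * (k:ℝ) + 1) * w)) / w) (1 / w) s :=
      ((hasDerivAt_id s).sub_const _).div_const w
    exact h1.comp s h2
  have h3 := ((HasDerivAt.fun_sum h).div_const (good.card : ℝ)).const_sub 1
  exact h3

lemma prof_facts {a w : ℝ} (hw : 0 < w) {good : Finset ℕ} {N : ℕ} (hN : good ⊆ Finset.range N)
    (hG : 0 < good.card) {D : ℝ} (hD : ∀ x, |deriv Real.smoothTransition x| ≤ D) :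
    (∀ s, 0 ≤ prof a w good s ∧ prof a w good s ≤ 1) ∧
    (∀ s, s ≤ a → prof a w good s = 1) ∧
    (∀ s, a + 3 * N * w ≤ s → prof a w good s = 0) ∧
    (∀ s, |deriv (prof a w good) s| ≤ D / (w * good.card)) ∧
    (∀ s, deriv (prof a w good) s ≠ 0 → ∃ k ∈ good,
      a + (3 * k + 1) * w ≤ s ∧ s ≤ a + (3 * k + 2) * w) := by
  have hG' : (0:ℝ) < good.card := by exact_mod_cast hG
  have hloc : ∀ (s : ℝ) (k : ℕ), deriv Real.smoothTransition ((s - (a + (3 * k + 1) * w)) / w) ≠ 0 →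
      a + (3 * k + 1) * w ≤ s ∧ s ≤ a + (3 * k + 2) * w := by
    intro s k hk
    by_contra hcon
    apply hk
    apply st_deriv_zero
    rintro ⟨h1, h2⟩
    rw [le_div_iff₀ hw] at h1
    rw [div_le_iff₀ hw] at h2
    exact hcon ⟨by linarith, by linarith⟩
  refine ⟨fun s => ⟨?_, ?_⟩, fun s hs => ?_, fun s hs => ?_, fun s => ?_, fun s hs => ?_⟩
  · unfold prof
    rw [sub_nonneg, div_le_one hG']
    calc _ ≤ ∑ k ∈ good, (1:ℝ) := Finset.sum_le_sum fun k _ => Real.smoothTransition.le_one _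
      _ = _ := by simp
  · unfold prof
    have : 0 ≤ (∑ k ∈ good, Real.smoothTransition ((s - (a + (3 * k + 1) * w)) / w)) / good.card :=
      div_nonneg (Finset.sum_nonneg fun k _ => Real.smoothTransition.nonneg _) hG'.le
    linarith
  · unfold prof
    rw [Finset.sum_eq_zero]
    · simp
    · intro k _
      apply Real.smoothTransition.zero_of_nonpos
      apply div_nonpos_of_nonpos_of_nonneg _ hw.le
      have : 0 ≤ (3 * (k:ℝ) + 1) * w := by positivity
      linarith
  · unfold prof
    rw [Finset.sum_congr rfl (g := fun _ => (1:ℝ))]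
    · simp; field_simp; simp
    · intro k hk
      apply Real.smoothTransition.one_of_one_le
      rw [le_div_iff₀ hw]
      have h1 : (k:ℝ) + 1 ≤ N := by exact_mod_cast Finset.mem_range.mp (hN hk)
      nlinarith
  · rw [(prof_hasDeriv a w good s).deriv, abs_neg, abs_div, abs_of_pos hG']
    have key : |∑ k ∈ good, deriv Real.smoothTransition ((s - (a + (3 * k + 1) * w)) / w) * (1 / w)|
        ≤ D / w := by
      by_cases hall : ∀ k ∈ good, deriv Real.smoothTransition ((s - (a + (3 * k + 1) * w)) / w) = 0
      · rw [Finset.sum_eq_zero]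
        · simp only [abs_zero]
          exact div_nonneg ((abs_nonneg _).trans (hD 0)) hw.le
        · intro k hk; rw [hall k hk, zero_mul]
      · push Not at hall
        obtain ⟨k0, hk0, hne⟩ := hall
        rw [Finset.sum_eq_single k0]
        · rw [abs_mul, abs_of_pos (by positivity : 0 < 1 / w), div_eq_mul_one_div D w]
          exact mul_le_mul_of_nonneg_right (hD _) (by positivity)
        · intro k _ hkne
          by_contra hcon
          have h1 := hloc s k (left_ne_zero_of_mul hcon)
          have h2 := hloc s k0 hne
          rcases lt_or_gt_of_ne hkne with h | h
          · have : (k:ℝ) + 1 ≤ k0 := by exact_mod_cast h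
            nlinarith
          · have : (k0:ℝ) + 1 ≤ k := by exact_mod_cast h
            nlinarith
        · intro h; exact absurd hk0 h
    calc _ ≤ (D / w) / good.card := by gcongr
      _ = _ := by rw [div_div]
  · rw [(prof_hasDeriv a w good s).deriv] at hs
    by_contra hcon
    push Not at hcon
    apply hs
    rw [Finset.sum_eq_zero]
    · simp
    · intro k hk
      by_contra h0
      have h1 := hloc s k (left_ne_zero_of_mul h0)
      exact absurd (hcon k hk h1.1) (not_lt.mpr h1.2)

/-- Markov: at least half of the disjoint layers carry little mass. -/
lemma good_layers {X : Type*} [MeasurableSpace X] (μ : Measure X) [IsFiniteMeasure μ]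
    (E : ℕ → Set X) (hE : ∀ k, MeasurableSet (E k)) (hd : Pairwise (Function.onFun Disjoint E))
    (N : ℕ) (hN : 0 < N) :
    ∃ good ⊆ Finset.range N, (N:ℝ) / 2 ≤ good.card ∧
      ∀ k ∈ good, μ.real (E k) ≤ 2 * (μ.real univ + 1) / N := by
  classical
  set T := μ.real univ + 1 with hT
  have hTpos : 0 < T := by positivity
  have hN' : (0:ℝ) < N := by exact_mod_cast hN
  set good := (Finset.range N).filter (fun k => μ.real (E k) ≤ 2 * T / N) with hgood
  set bad := (Finset.range N).filter (fun k => ¬ μ.real (E k) ≤ 2 * T / N) with hbad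
  refine ⟨good, Finset.filter_subset _ _, ?_, fun k hk => (Finset.mem_filter.mp hk).2⟩
  have hcard : good.card + bad.card = N := by
    have := Finset.card_filter_add_card_filter_not (s := Finset.range N)
      (fun k => μ.real (E k) ≤ 2 * T / N)
    rw [Finset.card_range] at this
    exact this
  have hsum : ∑ k ∈ bad, μ.real (E k) ≤ T := by
    rw [← measureReal_biUnion_finset (fun i _ j _ hij => hd hij) (fun k _ => hE k)]
    calc _ ≤ μ.real univ := measureReal_mono (subset_univ _)
      _ ≤ T := by linarith
  have hb : (bad.card : ℝ) * (2 * T / N) ≤ T := by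
    refine le_trans ?_ hsum
    rw [← nsmul_eq_mul]
    exact Finset.card_nsmul_le_sum _ _ _ fun k hk => (not_le.mp (Finset.mem_filter.mp hk).2).le
  have hb2 : (bad.card : ℝ) ≤ N / 2 := by
    have h1 : (bad.card : ℝ) * 2 / N ≤ 1 := by
      by_contra hcon
      push Not at hcon
      have : T < (bad.card : ℝ) * 2 / N * T := by nlinarith
      have h3 : (bad.card : ℝ) * (2 * T / N) = (bad.card : ℝ) * 2 / N * T := by ring
      linarith
    rw [div_le_one hN'] at h1
    linarith
  have : (good.card : ℝ) + bad.card = N := by exact_mod_cast hcard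
  linarith

set_option maxHeartbeats 1000000 in
lemma layer {d : ℕ} (μ : Measure (Euc d)) [IsFiniteMeasure μ] (x0 : Euc d) {r K : ℝ}
    (hr : 0 < r) (hK : 0 < K) :
    ∃ B1 C1 : ℝ, 0 ≤ B1 ∧ 0 ≤ C1 ∧ ∀ᶠ ε in 𝓝[>] (0:ℝ), ∃ χ : Euc d → ℝ,
      ContDiff ℝ (⊤ : ℕ∞) χ ∧ (∀ x, 0 ≤ χ x ∧ χ x ≤ 1) ∧ (∀ x ∈ ball x0 (r / 2), χ x = 1) ∧
      (∀ x, χ x ≠ 0 → x ∈ ball x0 (3 * r / 4)) ∧ (∀ x, ‖fderiv ℝ χ x‖ ≤ B1) ∧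
      (∀ x, fderiv ℝ χ x ≠ 0 → μ.real (ball x (K * ε)) ≤ C1 * ε) := by
  obtain ⟨D, hD0, hD⟩ := st_deriv_bound
  set T := μ.real univ + 1 with hT
  have hTpos : 0 < T := by positivity
  refine ⟨2 * D * 48 * 2 * r / (5 * r ^ 2), 4 * T * 144 * K / (5 * r), by positivity, by positivity, ?_⟩
  have hev : ∀ᶠ ε in 𝓝[>] (0:ℝ), ε < min (r / K) (5 * r / (144 * K)) := by
    apply eventually_nhdsWithin_of_eventually_nhds
    exact Iio_mem_nhds (by positivity)
  filter_upwards [hev, self_mem_nhdsWithin] with ε hε hε0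
  have hε0 : 0 < ε := hε0
  have hε1 : K * ε ≤ r := by
    have := (hε.trans_le (min_le_left _ _)).le
    rw [le_div_iff₀ hK] at this; linarith
  set z := 5 * r / (144 * K * ε) with hz
  have hz1 : 1 ≤ z := by
    have := (hε.trans_le (min_le_right _ _)).le
    rw [hz, one_le_div (by positivity)]
    rw [le_div_iff₀ (by positivity)] at this; linarith
  set N := ⌊z⌋₊ with hNdef
  have hN1 : 1 ≤ N := Nat.le_floor (by exact_mod_cast hz1)
  have hNz : (N:ℝ) ≤ z := Nat.floor_le (by linarith)
  have hNz2 : z / 2 ≤ N := by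
    have h1 : z < N + 1 := Nat.lt_floor_add_one z
    have h2 : (1:ℝ) ≤ N := by exact_mod_cast hN1
    linarith
  have hN0 : (0:ℝ) < N := by exact_mod_cast hN1
  set w := 5 * r ^ 2 / (48 * N) with hw
  have hwpos : 0 < w := by positivity
  have hNw : 3 * N * w = 5 * r ^ 2 / 16 := by rw [hw]; field_simp; norm_num
  have hwε : 3 * r * (K * ε) ≤ w := by
    rw [hw, le_div_iff₀ (by positivity)]
    have : N * (144 * K * ε) ≤ 5 * r := by
      rw [hz, le_div_iff₀ (by positivity)] at hNz; exact hNz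
    nlinarith
  set a := r ^ 2 / 4 with ha
  let E : ℕ → Set (Euc d) := fun k => {x | a + 3 * k * w ≤ ‖x - x0‖ ^ 2 ∧
    ‖x - x0‖ ^ 2 < a + (3 * k + 3) * w}
  have hcont : Continuous fun x : Euc d => ‖x - x0‖ ^ 2 := by fun_prop
  have hEm : ∀ k, MeasurableSet (E k) := fun k =>
    (measurableSet_le measurable_const hcont.measurable).inter
      (measurableSet_lt hcont.measurable measurable_const)
  have hEd : Pairwise (Function.onFun Disjoint E) := by
    intro i j hij
    rw [Function.onFun, Set.disjoint_left]
    rintro x ⟨h1, h2⟩ ⟨h3, h4⟩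
    rcases lt_or_gt_of_ne hij with h | h
    · have : (i:ℝ) + 1 ≤ j := by exact_mod_cast h
      nlinarith
    · have : (j:ℝ) + 1 ≤ i := by exact_mod_cast h
      nlinarith
  obtain ⟨good, hgs, hgc, hgm⟩ := good_layers μ E hEm hEd N hN1
  have hgpos : (0:ℝ) < good.card := by linarith [half_pos hN0]
  have hgpos' : 0 < good.card := by exact_mod_cast hgpos
  obtain ⟨f1, f2, f3, f4, f5⟩ := prof_facts (a := a) hwpos hgs hgpos' hD
  have hsq : ContDiff ℝ (⊤ : ℕ∞) (fun x : Euc d => ‖x - x0‖ ^ 2) :=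
    (contDiff_id.sub contDiff_const).norm_sq ℝ
  have hfd : ∀ x, HasFDerivAt (fun x => prof a w good (‖x - x0‖ ^ 2))
      (deriv (prof a w good) (‖x - x0‖ ^ 2) • (2 • (innerSL ℝ (x - x0)))) x := by
    intro x
    have h1 : HasFDerivAt (fun x : Euc d => ‖x - x0‖ ^ 2) (2 • (innerSL ℝ (x - x0))) x := by
      have := ((hasFDerivAt_id x).sub_const x0).norm_sq
      simpa using this
    have h2 : HasDerivAt (prof a w good) (deriv (prof a w good) (‖x - x0‖ ^ 2)) (‖x - x0‖ ^ 2) := by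
      rw [(prof_hasDeriv a w good _).deriv]; exact prof_hasDeriv a w good _
    exact HasDerivAt.comp_hasFDerivAt (h₂ := prof a w good) x h2 h1
  have hzero : ∀ x, deriv (prof a w good) (‖x - x0‖ ^ 2) ≠ 0 → ‖x - x0‖ < r := by
    intro x hx
    obtain ⟨k, hk, h1, h2⟩ := f5 _ hx
    have h3 : (k:ℝ) + 1 ≤ N := by exact_mod_cast Finset.mem_range.mp (hgs hk)
    have h4 : ‖x - x0‖ ^ 2 < r ^ 2 := by nlinarith
    exact lt_of_pow_lt_pow_left₀ 2 hr.le h4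
  refine ⟨fun x => prof a w good (‖x - x0‖ ^ 2), (prof_contDiff a w good).comp hsq,
    fun x => f1 _, fun x hx => f2 _ ?_, fun x hx => ?_, fun x => ?_, fun x hx => ?_⟩
  · rw [mem_ball, dist_eq_norm] at hx
    have := norm_nonneg (x - x0)
    nlinarith
  · rw [mem_ball, dist_eq_norm]
    by_contra hcon
    push Not at hcon
    apply hx
    apply f3
    have := norm_nonneg (x - x0)
    nlinarith
  · rw [(hfd x).fderiv]
    by_cases h0 : deriv (prof a w good) (‖x - x0‖ ^ 2) = 0
    · rw [h0, zero_smul, norm_zero]; positivity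
    · rw [norm_smul]
      have h1 : ‖(2:ℕ) • (innerSL ℝ (x - x0))‖ ≤ 2 * r := by
        rw [← Nat.cast_smul_eq_nsmul ℝ, norm_smul, innerSL_apply_norm]
        have := hzero x h0
        norm_num; linarith
      have h2 : ‖deriv (prof a w good) (‖x - x0‖ ^ 2)‖ ≤ D * 2 / (w * N) := by
        refine (f4 _).trans ?_
        rw [div_le_div_iff₀ (by positivity) (by positivity)]
        have : w * N ≤ 2 * (w * good.card) := by nlinarith
        nlinarith
      calc _ ≤ D * 2 / (w * N) * (2 * r) := by gcongr
        _ = _ := by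
          have : w * N = 5 * r ^ 2 / 48 := by linarith
          rw [this]; field_simp
  · rw [(hfd x).fderiv] at hx
    have h0 : deriv (prof a w good) (‖x - x0‖ ^ 2) ≠ 0 := fun h => hx (by rw [h, zero_smul])
    obtain ⟨k, hk, h1, h2⟩ := f5 _ h0
    have hxr := hzero x h0
    have hsub : ball x (K * ε) ⊆ E k := by
      intro y hy
      rw [mem_ball, dist_eq_norm] at hy
      have t1 : |‖y - x0‖ - ‖x - x0‖| ≤ ‖y - x‖ := by
        have := abs_norm_sub_norm_le (y - x0) (x - x0)
        simpa using this
      have t2 : ‖y - x0‖ ≤ 2 * r := by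
        have := (abs_le.mp t1).2; linarith
      have t4 : |‖y - x0‖ ^ 2 - ‖x - x0‖ ^ 2| < w := by
        rw [sq_sub_sq, abs_mul, mul_comm]
        have : |‖y - x0‖ + ‖x - x0‖| ≤ 3 * r := by
          rw [abs_of_nonneg (by positivity)]; linarith
        calc _ ≤ ‖y - x‖ * (3 * r) := mul_le_mul t1 this (abs_nonneg _) (by positivity)
          _ < (K * ε) * (3 * r) := by
            apply mul_lt_mul_of_pos_right hy; positivity
          _ ≤ w := by linarith
      have t5 := abs_lt.mp t4
      exact ⟨by linarith [t5.1], by linarith [t5.2]⟩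
    calc μ.real (ball x (K * ε)) ≤ μ.real (E k) := measureReal_mono hsub
      _ ≤ 2 * T / N := hgm k hk
      _ ≤ 2 * T / (z / 2) := by
        have : 0 < z := by linarith
        gcongr
      _ = _ := by rw [hz]; field_simp; norm_num

lemma proj_norm_le {d : ℕ} (ν h : Euc d) (hν : ‖ν‖ = 1) : ‖h - ⟪h, ν⟫ • ν‖ ≤ ‖h‖ := by
  have h1 : ‖h - ⟪h, ν⟫ • ν‖ ^ 2 = ‖h‖ ^ 2 - ⟪h, ν⟫ ^ 2 := by
    rw [norm_sub_sq_real, inner_smul_right, norm_smul, hν, mul_one, Real.norm_eq_abs, sq_abs]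
    ring
  have h2 : ‖h - ⟪h, ν⟫ • ν‖ ^ 2 ≤ ‖h‖ ^ 2 := by rw [h1]; nlinarith [sq_nonneg ⟪h, ν⟫]
  exact le_of_sq_le_sq h2 (norm_nonneg _)

lemma chart_shift {d : ℕ} {Ω : Set (Euc d)} {x ν : Euc d} {r L : ℝ} {ψ : Euc d → ℝ}
    (hν : ‖ν‖ = 1) (hL : 0 ≤ L) (hψ : LipschitzWith (Real.toNNReal L) ψ)
    (hch : ∀ y ∈ ball x r, (y ∈ Ω ↔ ⟪y, ν⟫ < ψ (y - ⟪y, ν⟫ • ν)))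
    {z h : Euc d} {τ : ℝ} (hz : z ∈ ball x r) (hzΩ : z ∉ Ω) (hz' : z + τ • ν + h ∈ ball x r)
    (hh : (1 + L) * ‖h‖ ≤ τ) : z + τ • ν + h ∉ Ω := by
  rw [hch _ hz] at hzΩ
  rw [hch _ hz']
  push Not at hzΩ ⊢
  have hνν : ⟪ν, ν⟫ = (1:ℝ) := by rw [real_inner_self_eq_norm_sq, hν]; norm_num
  have e1 : ⟪z + τ • ν + h, ν⟫ = ⟪z, ν⟫ + τ + ⟪h, ν⟫ := by
    rw [inner_add_left, inner_add_left, real_inner_smul_left, hνν, mul_one]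
  have e2 : (z + τ • ν + h) - ⟪z + τ • ν + h, ν⟫ • ν
      = (z - ⟪z, ν⟫ • ν) + (h - ⟪h, ν⟫ • ν) := by
    rw [e1, add_smul, add_smul]; abel
  have e3 : |ψ ((z - ⟪z, ν⟫ • ν) + (h - ⟪h, ν⟫ • ν)) - ψ (z - ⟪z, ν⟫ • ν)| ≤ L * ‖h‖ := by
    have := hψ.dist_le_mul ((z - ⟪z, ν⟫ • ν) + (h - ⟪h, ν⟫ • ν)) (z - ⟪z, ν⟫ • ν)
    rw [Real.dist_eq, dist_eq_norm, add_sub_cancel_left, Real.coe_toNNReal L hL] at this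
    exact this.trans (mul_le_mul_of_nonneg_left (proj_norm_le ν h hν) hL)
  have e4 : |⟪h, ν⟫| ≤ ‖h‖ := by
    have := abs_real_inner_le_norm h ν
    rwa [hν, mul_one] at this
  rw [e2, e1]
  have := (abs_le.mp e3).2
  have := (abs_le.mp e4).1
  linarith

set_option maxHeartbeats 1000000 in
theorem geo {d : ℕ} {Ω : Set (Euc d)} (hΩo : IsOpen Ω) (hΩb : Bornology.IsBounded Ω)
    (hΩl : HasLipschitzBoundary Ω) (μ : Measure (Euc d)) [IsFiniteMeasure μ] :
    ∃ c K B C1 : ℝ, 0 < c ∧ 0 < K ∧ 0 ≤ B ∧ 0 ≤ C1 ∧ ∀ᶠ ε in 𝓝[>] (0:ℝ), ∃ Φ : Euc d → Euc d,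
      ContDiff ℝ (⊤ : ℕ∞) Φ ∧ (∀ x, ‖Φ x - x‖ + c * ε ≤ K * ε) ∧
      (∃ ρ : ℝ, 0 < ρ ∧ ∀ x, ¬ (ball x ρ ⊆ Ω) → Disjoint (ball (Φ x) (c * ε)) Ω) ∧
      (∀ x, ‖fderiv ℝ Φ x - ContinuousLinearMap.id ℝ (Euc d)‖ ≤ B * ε) ∧
      (∀ x, fderiv ℝ Φ x ≠ ContinuousLinearMap.id ℝ (Euc d) →
        μ.real (ball x (K * ε)) ≤ C1 * ε) := by
  classical
  have hcl : IsCompact (closure Ω) := hΩb.isCompact_closure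
  have hfr : IsCompact (frontier Ω) := hcl.of_isClosed_subset isClosed_frontier
    frontier_subset_closure
  choose! ν r L ψ hν hr hL hψ hch using hΩl
  obtain ⟨t, htf, htc⟩ := hfr.elim_nhds_subcover (fun x => ball x (r x / 2))
    (fun x hx => ball_mem_nhds x (half_pos (hr x hx)))
  -- the constant c
  have hcev : ∀ᶠ c in 𝓝[>] (0:ℝ), ∀ k ∈ t, (1 + L k) * (2 * c) ≤ 1 := by
    rw [Filter.eventually_all_finset]
    intro k hk
    have hL' : 0 < 1 + L k := by linarith [hL k (htf k hk)]
    have : ∀ᶠ c in 𝓝[>] (0:ℝ), c < 1 / (2 * (1 + L k)) :=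
      eventually_nhdsWithin_of_eventually_nhds (Iio_mem_nhds (by positivity))
    filter_upwards [this] with c hc
    rw [lt_div_iff₀ (by positivity)] at hc
    linarith
  obtain ⟨c, hcL, hc0⟩ := (hcev.and self_mem_nhdsWithin).exists
  have hc0 : 0 < c := hc0
  set K : ℝ := t.card + 2 * c with hKdef
  have hK0 : 0 < K := by positivity
  have hlay : ∀ k ∈ t, _ := fun k hk => layer μ k (hr k (htf k hk)) hK0
  choose! B1 C1 hB1 hC1 hlay2 using hlay
  have hlay3 := (Filter.eventually_all_finset t).2 hlay2
  set B := ∑ k ∈ t, B1 k with hB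
  have hB0 : 0 ≤ B := Finset.sum_nonneg hB1
  -- the neighbourhood of the closure
  have hcover : closure Ω ⊆ Ω ∪ ⋃ x ∈ t, ball x (r x / 2) := by
    rw [closure_eq_self_union_frontier]
    exact union_subset_union_right _ htc
  obtain ⟨ρ0, hρ0, hthick⟩ := hcl.exists_thickening_subset_open
    (hΩo.union (isOpen_biUnion fun x _ => isOpen_ball)) hcover
  refine ⟨c, K, B, ∑ k ∈ t, C1 k, hc0, hK0, hB0, Finset.sum_nonneg hC1, ?_⟩
  have hev1 : ∀ᶠ ε in 𝓝[>] (0:ℝ), K * ε < ρ0 := by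
    have : ∀ᶠ ε in 𝓝[>] (0:ℝ), ε < ρ0 / K :=
      eventually_nhdsWithin_of_eventually_nhds (Iio_mem_nhds (by positivity))
    filter_upwards [this] with ε h
    rw [lt_div_iff₀ hK0] at h; linarith
  have hev2 : ∀ᶠ ε in 𝓝[>] (0:ℝ), B * ε ≤ 1 := by
    have : ∀ᶠ ε in 𝓝[>] (0:ℝ), ε < 1 / (B + 1) :=
      eventually_nhdsWithin_of_eventually_nhds (Iio_mem_nhds (by positivity))
    filter_upwards [this, self_mem_nhdsWithin] with ε h h0
    have h0 : 0 < ε := h0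
    rw [lt_div_iff₀ (by positivity)] at h; linarith
  have hev3 : ∀ᶠ ε in 𝓝[>] (0:ℝ), ∀ k ∈ t, K * ε < r k / 4 := by
    rw [Filter.eventually_all_finset]
    intro k hk
    have hrk := hr k (htf k hk)
    have : ∀ᶠ ε in 𝓝[>] (0:ℝ), ε < r k / 4 / K :=
      eventually_nhdsWithin_of_eventually_nhds (Iio_mem_nhds (by positivity))
    filter_upwards [this] with ε h
    rw [lt_div_iff₀ hK0] at h; linarith
  filter_upwards [hlay3, hev1, hev2, hev3, self_mem_nhdsWithin] with ε hχ he1 he2 he3 hε0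
  have hε0 : 0 < ε := hε0
  choose! χ hχs hχ01 hχ1 hχsupp hχd hχμ using hχ
  have hνt : ∀ k ∈ t, ‖ν k‖ = 1 := fun k hk => hν k (htf k hk)
  let b : Finset (Euc d) → Euc d → Euc d := fun F x => ∑ k ∈ F, χ k x • ν k
  have hbn : ∀ F ⊆ t, ∀ x, ‖b F x‖ ≤ t.card := by
    intro F hF x
    calc ‖b F x‖ ≤ ∑ k ∈ F, ‖χ k x • ν k‖ := norm_sum_le _ _
      _ ≤ ∑ k ∈ F, (1:ℝ) := by
        apply Finset.sum_le_sum
        intro k hk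
        rw [norm_smul, hνt k (hF hk), mul_one, Real.norm_eq_abs,
          abs_of_nonneg (hχ01 k (hF hk) x).1]
        exact (hχ01 k (hF hk) x).2
      _ = F.card := by simp
      _ ≤ t.card := by exact_mod_cast Finset.card_le_card hF
  let Φ : Euc d → Euc d := fun x => x + ε • b t x
  have hΦs : ContDiff ℝ (⊤ : ℕ∞) Φ := by
    have h1 : ContDiff ℝ (⊤ : ℕ∞) (b t) := by
      refine ContDiff.sum fun k hk => ?_
      have h0 := hχs k hk
      fun_prop
    show ContDiff ℝ (⊤ : ℕ∞) (fun x => x + ε • b t x)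
    fun_prop
  have hΦd : ∀ x, HasFDerivAt Φ (ContinuousLinearMap.id ℝ (Euc d) +
      ε • ∑ k ∈ t, (fderiv ℝ (χ k) x).smulRight (ν k)) x := by
    intro x
    refine (hasFDerivAt_id x).add (HasFDerivAt.const_smul ?_ ε)
    refine HasFDerivAt.fun_sum fun k hk => ?_
    exact ((hχs k hk).differentiable (by simp) x).hasFDerivAt.smul_const (ν k)
  have hΦdn : ∀ x, ‖fderiv ℝ Φ x - ContinuousLinearMap.id ℝ (Euc d)‖ ≤ B * ε := by
    intro x
    rw [(hΦd x).fderiv, add_sub_cancel_left, norm_smul, Real.norm_eq_abs, abs_of_pos hε0, mul_comm]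
    gcongr
    refine (norm_sum_le _ _).trans (Finset.sum_le_sum fun k hk => ?_)
    rw [ContinuousLinearMap.norm_smulRight_apply, hνt k hk, mul_one]
    exact hχd k hk x
  have hΦlip : LipschitzWith 2 Φ := by
    apply lipschitzWith_of_nnnorm_fderiv_le (𝕜 := ℝ) (hΦs.differentiable (by simp))
    intro x
    rw [← NNReal.coe_le_coe, coe_nnnorm]
    have h1 : fderiv ℝ Φ x = (fderiv ℝ Φ x - ContinuousLinearMap.id ℝ (Euc d))
      + ContinuousLinearMap.id ℝ (Euc d) := by abel
    rw [h1]
    refine (norm_add_le _ _).trans ?_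
    have h2 := ContinuousLinearMap.norm_id_le (𝕜 := ℝ) (E := Euc d)
    have h3 := hΦdn x
    norm_num; linarith
  have hΦx : ∀ x, ‖Φ x - x‖ ≤ t.card * ε := by
    intro x
    simp only [Φ, add_sub_cancel_left]
    rw [norm_smul, Real.norm_eq_abs, abs_of_pos hε0, mul_comm]
    gcongr
    exact hbn t subset_rfl x
  -- main claim
  have main : ∀ y ∉ Ω, ∀ h : Euc d, ‖h‖ < 2 * c * ε → Φ y + h ∉ Ω := by
    intro y hy h hh
    by_cases hyU : y ∈ ⋃ x ∈ t, ball x (r x / 2)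
    · simp only [mem_iUnion, exists_prop] at hyU
      obtain ⟨i, hit, hyi⟩ := hyU
      have hin : ∀ k ∈ t, χ k y ≠ 0 → ∀ F ⊆ t, ∀ h : Euc d, ‖h‖ ≤ 2 * c * ε →
          y + ε • b F y + h ∈ ball k (r k) := by
        intro k hk hne F hF h hh
        have h1 := hχsupp k hk y hne
        rw [mem_ball, dist_eq_norm] at h1 ⊢
        have h2 : y + ε • b F y + h - k = (y - k) + ε • b F y + h := by abel
        rw [h2]
        have h3 : ‖ε • b F y‖ ≤ ε * t.card := by
          rw [norm_smul, Real.norm_eq_abs, abs_of_pos hε0]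
          gcongr
          exact hbn F hF y
        have h4 := norm_add₃_le (a := y - k) (b := ε • b F y) (c := h)
        have h5 := he3 k hk
        rw [hKdef] at h5
        linarith
      have ind : ∀ F : Finset (Euc d), F ⊆ t → ∀ h : Euc d, ‖h‖ ≤ 2 * c * ε → (i ∈ F ∨ h = 0) →
          y + ε • b F y + h ∉ Ω := by
        intro F
        induction F using Finset.induction_on with
        | empty =>
          intro _ h _ hor
          rcases hor with h1 | h1
          · simp at h1
          · simpa [b, h1] using hy
        | insert k F hkF ih =>
          intro hF h hh hor
          have hkt : k ∈ t := hF (Finset.mem_insert_self _ _)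
          have hFt : F ⊆ t := (Finset.subset_insert _ _).trans hF
          have hbi : b (insert k F) y = χ k y • ν k + b F y := by
            simp only [b]; rw [Finset.sum_insert hkF]
          have hkf := htf k hkt
          by_cases hχ0 : χ k y = 0
          · rw [hbi, hχ0, zero_smul, zero_add]
            apply ih hFt h hh
            rcases hor with h1 | h1
            · rcases Finset.mem_insert.mp h1 with h2 | h2
              · exfalso
                subst h2
                rw [hχ1 i hkt y hyi] at hχ0
                exact one_ne_zero hχ0
              · exact Or.inl h2
            · exact Or.inr h1
          · have hcε : (0:ℝ) ≤ 2 * c * ε := by positivity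
            by_cases hki : k = i
            · subst hki
              have hone : χ k y = 1 := hχ1 k hkt y hyi
              have z1 := ih hFt 0 (by rw [norm_zero]; exact hcε) (Or.inr rfl)
              have z2 := hin k hkt hχ0 F hFt 0 (by rw [norm_zero]; exact hcε)
              have z3 := hin k hkt hχ0 _ hF h hh
              have e : y + ε • b (insert k F) y + h = (y + ε • b F y + 0) + ε • ν k + h := by
                rw [hbi, hone, one_smul, smul_add]; abel
              rw [e] at z3 ⊢
              refine chart_shift (hν k hkf) (hL k hkf) (hψ k hkf) (hch k hkf) z2 z1 z3 ?_
              have h6 := hcL k hkt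
              have h7 : 0 ≤ L k := hL k hkf
              calc (1 + L k) * ‖h‖ ≤ (1 + L k) * (2 * c * ε) := by gcongr
                _ = (1 + L k) * (2 * c) * ε := by ring
                _ ≤ 1 * ε := by gcongr
                _ = ε := one_mul _
            · have hor' : i ∈ F ∨ h = 0 := by
                rcases hor with h1 | h1
                · rcases Finset.mem_insert.mp h1 with h2 | h2
                  · exact absurd h2.symm hki
                  · exact Or.inl h2
                · exact Or.inr h1
              have z1 := ih hFt h hh hor'
              have z2 := hin k hkt hχ0 F hFt h hh
              have z3 := hin k hkt hχ0 _ hF h hh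
              have e : y + ε • b (insert k F) y + h
                  = (y + ε • b F y + h) + (ε * χ k y) • ν k + 0 := by
                rw [hbi, smul_add, smul_smul]; abel
              rw [e] at z3 ⊢
              refine chart_shift (hν k hkf) (hL k hkf) (hψ k hkf) (hch k hkf) z2 z1 z3 ?_
              rw [norm_zero, mul_zero]
              exact mul_nonneg hε0.le (hχ01 k hkt y).1
      exact ind t subset_rfl h hh.le (Or.inl hit)
    · intro hcon
      have hyth : y ∉ thickening ρ0 (closure Ω) := by
        intro hy2
        rcases hthick hy2 with h1 | h1
        · exact hy h1
        · exact hyU h1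
      apply hyth
      rw [mem_thickening_iff]
      refine ⟨_, subset_closure hcon, ?_⟩
      rw [dist_comm, dist_eq_norm]
      have e : Φ y + h - y = (Φ y - y) + h := by abel
      rw [e]
      have h1 := norm_add_le (Φ y - y) h
      have h2 := hΦx y
      rw [hKdef] at he1
      linarith
  refine ⟨Φ, hΦs, fun x => ?_, ⟨c * ε / 2, by positivity, fun x hx => ?_⟩, hΦdn, fun x hx => ?_⟩
  · have := hΦx x
    have h2 : 0 < c * ε := by positivity
    rw [hKdef]; linarith
  · rw [Set.not_subset] at hx
    obtain ⟨y, hyb, hy⟩ := hx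
    rw [Set.disjoint_left]
    intro z hz hzΩ
    have e : z = Φ y + (z - Φ y) := by abel
    rw [e] at hzΩ
    refine main y hy (z - Φ y) ?_ hzΩ
    have h1 := hΦlip.dist_le_mul x y
    rw [mem_ball] at hz hyb
    rw [← dist_eq_norm]
    have h2 := dist_triangle z (Φ x) (Φ y)
    rw [dist_comm y x] at hyb
    have h3 : ((2 : ℝ≥0) : ℝ) = 2 := rfl
    rw [h3] at h1
    linarith
  · rw [(hΦd x).fderiv] at hx
    have : ∃ k ∈ t, fderiv ℝ (χ k) x ≠ 0 := by
      by_contra hcon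
      push Not at hcon
      apply hx
      rw [Finset.sum_eq_zero]
      · simp
      · intro k hk
        rw [hcon k hk]; ext; simp
    obtain ⟨k, hk, hne⟩ := this
    refine (hχμ k hk x hne).trans ?_
    gcongr
    exact Finset.single_le_sum hC1 hk

/-- Averaging kernels: nonnegative, mass one, bounded by `S`, supported within distance `R`. -/
structure IsAvgKer {d : ℕ} (k : Euc d → Euc d → ℝ) (S R : ℝ) : Prop where
  nonneg : ∀ x y, 0 ≤ k x y
  cont : Continuous (Function.uncurry k)
  mass : ∀ x, ∫⁻ y, ENNReal.ofReal (k x y) = 1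
  le : ∀ x y, k x y ≤ S
  supp : ∀ x y, k x y ≠ 0 → y ∈ ball x R

namespace IsAvgKer

variable {d : ℕ} {k : Euc d → Euc d → ℝ} {S R : ℝ}
  {E : Type*} [NormedAddCommGroup E] [NormedSpace ℝ E]

lemma cont_right (hk : IsAvgKer k S R) (x : Euc d) : Continuous (k x) :=
  hk.cont.comp (by fun_prop : Continuous fun y : Euc d => (x, y))

lemma int_smul (hk : IsAvgKer k S R) {f : Euc d → E} (hf : LocallyIntegrable f volume) (x : Euc d) :
    Integrable (fun y => k x y • f y) := by
  have h1 : IntegrableOn f (closedBall x R) := hf.integrableOn_isCompact (isCompact_closedBall x R)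
  have h2 : IntegrableOn (fun y => k x y • f y) (closedBall x R) := by
    refine Integrable.bdd_smul h1 S (hk.cont_right x).aestronglyMeasurable ?_
    filter_upwards with y
    rw [Real.norm_eq_abs, abs_of_nonneg (hk.nonneg x y)]
    exact hk.le x y
  rw [← integrableOn_iff_integrable_of_support_subset (s := closedBall x R)]
  · exact h2
  · intro y hy
    apply ball_subset_closedBall
    apply hk.supp
    intro h
    apply hy
    simp [h]

lemma integral_one (hk : IsAvgKer k S R) (x : Euc d) : ∫ y, k x y = 1 := by
  rw [integral_eq_lintegral_of_nonneg_ae (ae_of_all _ (hk.nonneg x))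
    (hk.cont_right x).aestronglyMeasurable, hk.mass x]; simp

lemma jensen (hk : IsAvgKer k S R) {f : Euc d → E} (hf : AEStronglyMeasurable f volume)
    {p : ℝ} (hp : 1 ≤ p) (x : Euc d) :
    ‖∫ y, k x y • f y‖ₑ ^ p ≤ ∫⁻ y, ENNReal.ofReal (k x y) * ‖f y‖ₑ ^ p := by
  have hp0 : 0 < p := by linarith
  have hm : Measurable fun y => ENNReal.ofReal (k x y) :=
    (hk.cont_right x).measurable.ennreal_ofReal
  set ν := (volume : Measure (Euc d)).withDensity (fun y => ENNReal.ofReal (k x y)) with hν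
  have : IsProbabilityMeasure ν := ⟨by
    rw [hν, withDensity_apply _ MeasurableSet.univ, Measure.restrict_univ, hk.mass x]⟩
  have hac : ν ≪ volume := withDensity_absolutelyContinuous _ _
  have h1 : ‖∫ y, k x y • f y‖ₑ ≤ eLpNorm f 1 ν := by
    refine (enorm_integral_le_lintegral_enorm _).trans ?_
    rw [eLpNorm_one_eq_lintegral_enorm, hν,
      lintegral_withDensity_eq_lintegral_mul₀ hm.aemeasurable hf.enorm]
    refine le_of_eq (lintegral_congr fun y => ?_)
    rw [enorm_smul, Pi.mul_apply, Real.enorm_of_nonneg (hk.nonneg x y)]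
  have h2 : eLpNorm f 1 ν ≤ eLpNorm f (ENNReal.ofReal p) ν := by
    refine eLpNorm_le_eLpNorm_of_exponent_le ?_ (hf.mono_ac hac)
    rw [← ENNReal.ofReal_one]; exact ENNReal.ofReal_le_ofReal hp
  have h3 : eLpNorm f (ENNReal.ofReal p) ν ^ p =
      ∫⁻ y, ENNReal.ofReal (k x y) * ‖f y‖ₑ ^ p := by
    rw [eLpNorm_eq_lintegral_rpow_enorm_toReal (by simpa using hp0) ENNReal.ofReal_ne_top,
      ENNReal.toReal_ofReal hp0.le, ← ENNReal.rpow_mul, one_div, inv_mul_cancel₀ hp0.ne',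
      ENNReal.rpow_one, hν, lintegral_withDensity_eq_lintegral_mul₀ hm.aemeasurable
        (hf.enorm.pow_const p)]
    rfl
  rw [← h3]
  exact ENNReal.rpow_le_rpow (h1.trans h2) hp0.le

lemma sup_bound (hk : IsAvgKer k S R) {f : Euc d → E} (hf : AEStronglyMeasurable f volume)
    {p : ℝ} (hp : 1 ≤ p) (x : Euc d) :
    ‖∫ y, k x y • f y‖ₑ ^ p ≤ ENNReal.ofReal S * ∫⁻ y in ball x R, ‖f y‖ₑ ^ p := by
  refine (hk.jensen hf hp x).trans ?_
  rw [← lintegral_const_mul' _ _ ENNReal.ofReal_ne_top,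
    ← lintegral_indicator measurableSet_ball]
  apply lintegral_mono
  intro y
  by_cases hy : y ∈ ball x R
  · rw [indicator_of_mem hy]
    exact mul_le_mul_left (ENNReal.ofReal_le_ofReal (hk.le x y)) _
  · have : k x y = 0 := by
      by_contra h; exact hy (hk.supp x y h)
    simp [this]

lemma lp_bound (hk : IsAvgKer k S R) {f : Euc d → E} (hf : AEStronglyMeasurable f volume)
    {p : ℝ} (hp : 1 ≤ p) {C : ℝ≥0∞} (hC : ENNReal.ofReal S * volume (ball (0 : Euc d) R) ≤ C) :
    eLpNorm (fun x => ∫ y, k x y • f y) (ENNReal.ofReal p) volume ≤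
      C ^ (1 / p) * eLpNorm f (ENNReal.ofReal p) volume := by
  have hp0 : 0 < p := by linarith
  rw [eLpNorm_eq_lintegral_rpow_enorm_toReal (by simpa using hp0) ENNReal.ofReal_ne_top,
    eLpNorm_eq_lintegral_rpow_enorm_toReal (by simpa using hp0) ENNReal.ofReal_ne_top,
    ENNReal.toReal_ofReal hp0.le, ← ENNReal.mul_rpow_of_nonneg _ _ (by positivity)]
  apply ENNReal.rpow_le_rpow _ (by positivity)
  have hm : Measurable (Function.uncurry fun x y => ENNReal.ofReal (k x y)) :=
    hk.cont.measurable.ennreal_ofReal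
  calc ∫⁻ x, ‖∫ y, k x y • f y‖ₑ ^ p
      ≤ ∫⁻ x, ∫⁻ y, ENNReal.ofReal (k x y) * ‖f y‖ₑ ^ p := lintegral_mono fun x => hk.jensen hf hp x
    _ = ∫⁻ y, ∫⁻ x, ENNReal.ofReal (k x y) * ‖f y‖ₑ ^ p := by
        apply lintegral_lintegral_swap
        exact hm.aemeasurable.mul ((hf.enorm.pow_const p).comp_snd)
    _ ≤ ∫⁻ y, C * ‖f y‖ₑ ^ p := by
        apply lintegral_mono
        intro y
        show ∫⁻ x, ENNReal.ofReal (k x y) * ‖f y‖ₑ ^ p ≤ C * ‖f y‖ₑ ^ p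
        rw [lintegral_mul_const]
        swap
        · exact hm.comp (by fun_prop : Measurable fun x : Euc d => (x, y))
        gcongr
        refine le_trans ?_ hC
        have : ENNReal.ofReal S * volume (ball (0 : Euc d) R)
            = ∫⁻ x in ball y R, ENNReal.ofReal S := by
          rw [setLIntegral_const, Measure.addHaar_ball_center volume y]
        rw [this, ← lintegral_indicator measurableSet_ball]
        apply lintegral_mono
        intro x
        by_cases hx : x ∈ ball y R
        · rw [indicator_of_mem hx]
          exact ENNReal.ofReal_le_ofReal (hk.le x y)
        · have : k x y = 0 := by
            by_contra h
            have := hk.supp x y h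
            rw [mem_ball, dist_comm] at this
            exact hx this
          simp [this]
    _ = C * ∫⁻ y, ‖f y‖ₑ ^ p := by
        rw [lintegral_const_mul'' _ (hf.enorm.pow_const p)]

end IsAvgKer

lemma avg_measurable {d : ℕ} {k : Euc d → Euc d → ℝ} {S R : ℝ} (hk : IsAvgKer k S R)
    {E : Type*} [NormedAddCommGroup E] [NormedSpace ℝ E] {f : Euc d → E}
    (hf : AEStronglyMeasurable f volume) :
    AEStronglyMeasurable (fun x => ∫ y, k x y • f y) volume := by
  have : AEStronglyMeasurable (fun z : Euc d × Euc d => k z.1 z.2 • f z.2)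
      ((volume : Measure (Euc d)).prod volume) :=
    hk.cont.aestronglyMeasurable.smul hf.comp_snd
  exact this.integral_prod_right'

/-- Averages over shrinking kernels converge in `L^p(Ω)`. -/
lemma avg_tendsto {d : ℕ} {Ω : Set (Euc d)} (hΩ : volume Ω ≠ ⊤)
    {E : Type*} [NormedAddCommGroup E] [NormedSpace ℝ E] [CompleteSpace E] {f : Euc d → E}
    {p : ℝ} (hp : 1 ≤ p) (hf : MemLp f (ENNReal.ofReal p) volume)
    {k : ℕ → Euc d → Euc d → ℝ} {S R : ℕ → ℝ} (hk : ∀ n, IsAvgKer (k n) (S n) (R n))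
    (hR : Tendsto R atTop (𝓝 0)) {C : ℝ≥0∞} (hCt : C ≠ ⊤)
    (hC : ∀ n, ENNReal.ofReal (S n) * volume (ball (0 : Euc d) (R n)) ≤ C) :
    Tendsto (fun n => eLpNorm (fun x => (∫ y, k n x y • f y) - f x) (ENNReal.ofReal p)
      (volume.restrict Ω)) atTop (𝓝 0) := by
  have hp0 : 0 < p := by linarith
  have hp1 : 1 ≤ ENNReal.ofReal p := by
    rw [← ENNReal.ofReal_one]; exact ENNReal.ofReal_le_ofReal hp
  rw [ENNReal.tendsto_nhds_zero]
  intro η hη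
  by_cases hηt : η = ⊤
  · subst hηt; simp
  -- approximate
  set D := C ^ (1 / p) + 1 with hD
  have hDt : D ≠ ⊤ := ENNReal.add_ne_top.2 ⟨ENNReal.rpow_ne_top_of_nonneg (by positivity) hCt,
    ENNReal.one_ne_top⟩
  have hD0 : D ≠ 0 := by simp [hD]
  set η1 := η / 2 / D with hη1
  have hη1' : η1 ≠ 0 := by
    rw [hη1]; exact (ENNReal.div_pos (ENNReal.div_pos hη.ne' (by simp)).ne' hDt).ne'
  obtain ⟨h, hhs, hhf, hhc, hhm⟩ := hf.exists_hasCompactSupport_eLpNorm_sub_le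
    ENNReal.ofReal_ne_top hη1'
  -- uniform continuity
  have huc : UniformContinuous h := hhs.uniformContinuous_of_continuous hhc
  set V := (volume Ω) ^ (ENNReal.ofReal p).toReal⁻¹ with hV
  have hVt : V ≠ ⊤ := ENNReal.rpow_ne_top_of_nonneg (by positivity) hΩ
  have hω : ∃ ω : ℝ, 0 < ω ∧ V * ENNReal.ofReal ω ≤ η / 2 := by
    have : Tendsto (fun ω : ℝ => V * ENNReal.ofReal ω) (𝓝[>] 0) (𝓝 0) := by
      have h1 : Tendsto (fun ω : ℝ => ENNReal.ofReal ω) (𝓝[>] 0) (𝓝 0) := by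
        have := (ENNReal.continuous_ofReal.tendsto 0).mono_left
          (nhdsWithin_le_nhds (s := Ioi (0:ℝ)))
        simpa using this
      have := ENNReal.Tendsto.const_mul (a := V) h1 (Or.inr hVt)
      simpa using this
    have h2 := (this.eventually (ge_mem_nhds (ENNReal.half_pos hη.ne'))).and
      (self_mem_nhdsWithin)
    obtain ⟨ω, h3, h4⟩ := h2.exists
    exact ⟨ω, h4, h3⟩
  obtain ⟨ω, hω0, hωV⟩ := hω
  obtain ⟨δ, hδ, hδω⟩ := Metric.uniformContinuous_iff.mp huc ω hω0
  have hRev : ∀ᶠ n in atTop, R n < δ := hR.eventually (gt_mem_nhds hδ)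
  filter_upwards [hRev] with n hn
  have hfl := hf.locallyIntegrable hp1
  have hhl := hhm.locallyIntegrable hp1
  have e1 : (fun x => (∫ y, k n x y • f y) - f x) =
      ((fun x => ∫ y, k n x y • (f - h) y) + (h - f)) + (fun x => (∫ y, k n x y • h y) - h x) := by
    funext x
    have : ∫ y, k n x y • (f - h) y = (∫ y, k n x y • f y) - ∫ y, k n x y • h y := by
      rw [← integral_sub ((hk n).int_smul hfl x) ((hk n).int_smul hhl x)]
      congr 1; funext y; rw [Pi.sub_apply, smul_sub]
    simp only [Pi.add_apply, Pi.sub_apply] at this ⊢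
    rw [this]; abel
  have hfh : AEStronglyMeasurable (f - h) volume := hf.1.sub hhm.1
  have m1 : AEStronglyMeasurable (fun x => ∫ y, k n x y • (f - h) y) volume :=
    avg_measurable (hk n) hfh
  have m2 : AEStronglyMeasurable (fun x => (∫ y, k n x y • h y) - h x) volume :=
    (avg_measurable (hk n) hhm.1).sub hhm.1
  rw [e1]
  have b1 : eLpNorm (fun x => (∫ y, k n x y • h y) - h x) (ENNReal.ofReal p)
      (volume.restrict Ω) ≤ η / 2 := by
    refine le_trans (eLpNorm_le_of_ae_bound (C := ω) (ae_of_all _ fun x => ?_)) ?_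
    · have : (∫ y, k n x y • h y) - h x = ∫ y, k n x y • (h y - h x) := by
        have h1 : Integrable (fun y => k n x y • h x) :=
          (hk n).int_smul (f := fun _ => h x) (locallyIntegrable_const _) x
        have h2 : h x = ∫ y, k n x y • h x := by
          have := integral_smul_const (μ := (volume : Measure (Euc d))) (k n x) (h x)
          rw [this, (hk n).integral_one, one_smul]
        conv_lhs => rw [h2]
        rw [← integral_sub ((hk n).int_smul hhl x) h1]
        congr 1; funext y; rw [smul_sub]
      rw [this]
      have hIntg : Integrable (k n x) := by
        have := (hk n).int_smul (f := fun _ => (1:ℝ)) (locallyIntegrable_const _) x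
        simpa using this
      refine (norm_integral_le_of_norm_le (hIntg.mul_const ω) (ae_of_all _ fun y => ?_)).trans ?_
      · rw [norm_smul, Real.norm_eq_abs, abs_of_nonneg ((hk n).nonneg x y)]
        by_cases h0 : k n x y = 0
        · simp [h0]
        · apply mul_le_mul_of_nonneg_left _ ((hk n).nonneg x y)
          have := (hk n).supp x y h0
          rw [mem_ball] at this
          rw [← dist_eq_norm]
          exact (hδω (this.trans hn)).le
      · rw [integral_mul_const, (hk n).integral_one, one_mul]
    · rw [Measure.restrict_apply_univ]; exact hωV
  have b2 : eLpNorm ((fun x => ∫ y, k n x y • (f - h) y) + (h - f)) (ENNReal.ofReal p)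
      (volume.restrict Ω) ≤ η / 2 := by
    refine (eLpNorm_mono_measure _ Measure.restrict_le_self).trans ?_
    refine (eLpNorm_add_le m1 (hhm.1.sub hf.1) hp1).trans ?_
    calc _ ≤ C ^ (1 / p) * eLpNorm (f - h) (ENNReal.ofReal p) volume
          + 1 * eLpNorm (f - h) (ENNReal.ofReal p) volume := by
          rw [one_mul, eLpNorm_sub_comm h f]
          gcongr
          exact (hk n).lp_bound hfh hp (hC n)
      _ = D * eLpNorm (f - h) (ENNReal.ofReal p) volume := by rw [hD, add_mul]
      _ ≤ D * η1 := by gcongr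
      _ = η / 2 := by rw [hη1, ENNReal.mul_div_cancel hD0 hDt]
  refine (eLpNorm_add_le (m1.add (hhm.1.sub hf.1)).restrict m2.restrict hp1).trans ?_
  calc _ ≤ η / 2 + η / 2 := add_le_add b2 b1
    _ = η := ENNReal.add_halves η

lemma ibp_smooth {d m : ℕ} {Ω : Set (Euc d)} {w : Euc d → Euc m} (hw : IsCcSmooth Ω w)
    {φ : Euc d → ℝ} (hφ : ContDiff ℝ (⊤ : ℕ∞) φ) (i : Fin m) (j : Fin d) :
    ∫ x in Ω, w x i * fderiv ℝ φ x (EuclideanSpace.single j 1) =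
        - ∫ x in Ω, smoothJac w x i j * φ x := by
  obtain ⟨hw1, hw2, hw3⟩ := hw
  have hwi : ContDiff ℝ (⊤ : ℕ∞) (fun x => w x i) := by fun_prop
  have hJ : ∀ x, smoothJac w x i j = fderiv ℝ (fun x => w x i) x (EuclideanSpace.single j 1) := by
    intro x
    have h1 : HasFDerivAt w (fderiv ℝ w x) x := (hw1.differentiable (by simp) x).hasFDerivAt
    have h2 := (EuclideanSpace.proj (𝕜 := ℝ) (ι := Fin m) i).hasFDerivAt.comp x h1
    have h3 : fderiv ℝ (fun x => w x i) x = _ := h2.fderiv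
    rw [h3]; rfl
  have hs : HasCompactSupport (fun x => w x i) := by
    refine hw2.mono ?_
    intro x hx hx0
    exact hx (by simp [hx0])
  have hc1 : Continuous (fun x => fderiv ℝ φ x (EuclideanSpace.single j 1)) :=
    (hφ.continuous_fderiv (by simp)).clm_apply continuous_const
  have hc2 : Continuous (fun x => fderiv ℝ (fun x => w x i) x (EuclideanSpace.single j 1)) :=
    (hwi.continuous_fderiv (by simp)).clm_apply continuous_const
  have hs2 : HasCompactSupport
      (fun x => fderiv ℝ (fun x => w x i) x (EuclideanSpace.single j 1)) :=
    hs.fderiv_apply ℝ _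
  have hz : ∀ x, x ∉ Ω → w x = 0 := fun x hx => image_eq_zero_of_notMem_tsupport
    (fun h => hx (hw3 h))
  have hz2 : ∀ x, x ∉ Ω → fderiv ℝ w x = 0 := by
    intro x hx
    have := (support_fderiv_subset ℝ (f := w))
    by_contra h
    exact hx (hw3 (this h))
  rw [setIntegral_eq_integral_of_forall_compl_eq_zero (fun x hx => by simp [hz x hx]),
    setIntegral_eq_integral_of_forall_compl_eq_zero (fun x hx => by simp [smoothJac, hz2 x hx])]
  simp_rw [hJ]
  refine integral_mul_fderiv_eq_neg_fderiv_mul_of_integrable ?_ ?_ ?_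
    (fun x _ => hwi.differentiable (by simp) x) (fun x _ => hφ.differentiable (by simp) x)
  · exact (hc2.mul hφ.continuous).integrable_of_hasCompactSupport hs2.mul_right
  · exact (hwi.continuous.mul hc1).integrable_of_hasCompactSupport hs.mul_right
  · exact (hwi.continuous.mul hφ.continuous).integrable_of_hasCompactSupport hs.mul_right

lemma smoothJac_continuous {d m : ℕ} {w : Euc d → Euc m} (hw : ContDiff ℝ 1 w) :
    Continuous (smoothJac w) := by
  refine continuous_pi fun i => continuous_pi fun j => ?_
  have : Continuous (fun x => fderiv ℝ w x (EuclideanSpace.single j 1)) :=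
    (hw.continuous_fderiv (by simp)).clm_apply continuous_const
  exact (EuclideanSpace.proj (𝕜 := ℝ) (ι := Fin m) i).continuous.comp this

lemma smoothJac_hasCompactSupport {d m : ℕ} {w : Euc d → Euc m} (hw : HasCompactSupport w) :
    HasCompactSupport (smoothJac w) := by
  refine (hw.fderiv ℝ).mono ?_
  intro x hx hx0
  apply hx
  ext i j
  have : fderiv ℝ w x = 0 := hx0
  simp [smoothJac, this]

lemma isCcSmooth_memW1p0 {d m : ℕ} {Ω : Set (Euc d)} {p : ℝ≥0∞} {w : Euc d → Euc m}
    (hw : IsCcSmooth Ω w) : MemW1p0 Ω p w (smoothJac w) := by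
  have hc : ContDiff ℝ 1 w := hw.1.of_le (by norm_cast)
  refine ⟨⟨?_, ?_, ?_⟩, fun _ => w, fun _ => hw, ?_, ?_⟩
  · exact (hw.1.continuous.memLp_of_hasCompactSupport hw.2.1).restrict _
  · exact ((smoothJac_continuous hc).memLp_of_hasCompactSupport
      (smoothJac_hasCompactSupport hw.2.1)).restrict _
  · intro φ hφ _ _ i j
    exact ibp_smooth hw hφ i j
  · simp
  · simp

lemma tendsto_integral_mul_of_Lp {α : Type*} [MeasurableSpace α] {μ : Measure α}
    [IsFiniteMeasure μ] {p : ℝ≥0∞} (hp : 1 ≤ p) {f : ℕ → α → ℝ} {f0 ψ : α → ℝ}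
    (hf : ∀ n, MemLp (f n) p μ) (hf0 : MemLp f0 p μ)
    (h : Tendsto (fun n => eLpNorm (f n - f0) p μ) atTop (𝓝 0))
    (hψ : AEStronglyMeasurable ψ μ) {C : ℝ} (hC : ∀ x, ‖ψ x‖ ≤ C) :
    Tendsto (fun n => ∫ x, f n x * ψ x ∂μ) atTop (𝓝 (∫ x, f0 x * ψ x ∂μ)) := by
  have hIntg : ∀ {u : α → ℝ}, MemLp u p μ → Integrable (fun x => u x * ψ x) μ := by
    intro u hu
    exact (hu.integrable hp).mul_bdd (c := C) hψ (Eventually.of_forall hC)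
  refine tendsto_integral_of_L1' _ (hIntg hf0).1 (Eventually.of_forall fun n => hIntg (hf n)) ?_
  have hb : ∀ n, eLpNorm ((fun x => f n x * ψ x) - fun x => f0 x * ψ x) 1 μ ≤
      ENNReal.ofReal C * (eLpNorm (f n - f0) p μ * μ univ ^ (1 / (1:ℝ≥0∞).toReal - 1 / p.toReal)) := by
    intro n
    refine (eLpNorm_le_mul_eLpNorm_of_ae_le_mul (g := f n - f0) (c := C)
      (Eventually.of_forall fun x => ?_) 1).trans ?_
    · have : ((fun x => f n x * ψ x) - fun x => f0 x * ψ x) x = ψ x * (f n - f0) x := by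
        simp; ring
      rw [this, norm_mul]
      gcongr
      exact hC x
    · gcongr
      exact eLpNorm_le_eLpNorm_mul_rpow_measure_univ hp ((hf n).1.sub hf0.1)
  refine tendsto_of_tendsto_of_tendsto_of_le_of_le tendsto_const_nhds ?_ (fun _ => zero_le)
    hb
  have hpp : μ univ ^ (1 / (1:ℝ≥0∞).toReal - 1 / p.toReal) ≠ ⊤ := by
    apply ENNReal.rpow_ne_top_of_nonneg _ (measure_ne_top _ _)
    rcases eq_or_ne p ⊤ with rfl | hpt
    · simp
    · have : 1 ≤ p.toReal := by
        rw [← ENNReal.toReal_one]; exact ENNReal.toReal_mono hpt hp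
      have := inv_le_one_of_one_le₀ this
      simp; linarith
  have := ENNReal.Tendsto.const_mul (a := ENNReal.ofReal C)
    (ENNReal.Tendsto.mul_const h (Or.inr hpp)) (Or.inr ENNReal.ofReal_ne_top)
  simpa using this

lemma eLpNorm_comp_le {α : Type*} [MeasurableSpace α] {μ : Measure α} {E : Type*}
    [NormedAddCommGroup E] {f : α → E} {g : α → ℝ} {p : ℝ≥0∞} (h : ∀ x, ‖g x‖ ≤ ‖f x‖) :
    eLpNorm g p μ ≤ eLpNorm f p μ := eLpNorm_mono h

lemma ibp_limit {d m : ℕ} {Ω : Set (Euc d)} (hΩb : Bornology.IsBounded Ω)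
    {p : ℝ≥0∞} (hp : 1 ≤ p) {v : Euc d → Euc m} {Dv : Euc d → Mat m d}
    (hv : MemW1p0 Ω p v Dv)
    {φ : Euc d → ℝ} (hφ : ContDiff ℝ (⊤ : ℕ∞) φ) (hφc : HasCompactSupport φ)
    (i : Fin m) (j : Fin d) :
    ∫ x in Ω, v x i * fderiv ℝ φ x (EuclideanSpace.single j 1) =
        - ∫ x in Ω, Dv x i j * φ x := by
  obtain ⟨⟨hv1, hv2, -⟩, w, hw, hw1, hw2⟩ := hv
  have : IsFiniteMeasure (volume.restrict Ω) := ⟨by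
    simpa using hΩb.measure_lt_top⟩
  have hwm := fun n => isCcSmooth_memW1p0 (p := p) (hw n)
  obtain ⟨C1, hC1⟩ := hφ.continuous.bounded_above_of_compact_support hφc
  have hc1 : Continuous (fun x => fderiv ℝ φ x (EuclideanSpace.single j 1)) :=
    (hφ.continuous_fderiv (by simp)).clm_apply continuous_const
  obtain ⟨C2, hC2⟩ := hc1.bounded_above_of_compact_support (hφc.fderiv_apply ℝ _)
  have mv : ∀ {u : Euc d → Euc m}, MemLp u p (volume.restrict Ω) →
      MemLp (fun x => u x i) p (volume.restrict Ω) := by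
    intro u hu
    refine hu.of_le ((EuclideanSpace.proj (𝕜 := ℝ) 
      i).continuous.comp_aestronglyMeasurable hu.1) (Eventually.of_forall fun x => ?_)
    exact PiLp.norm_apply_le _ _
  have mD : ∀ {u : Euc d → Mat m d}, MemLp u p (volume.restrict Ω) →
      MemLp (fun x => u x i j) p (volume.restrict Ω) := by
    intro u hu
    refine hu.of_le ((by fun_prop : Continuous fun z : Mat m d =>
      z i j).comp_aestronglyMeasurable hu.1) (Eventually.of_forall fun x => ?_)
    exact (norm_le_pi_norm (u x i) j).trans (norm_le_pi_norm (u x) i)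
  have t1 := tendsto_integral_mul_of_Lp hp (f := fun n x => w n x i) (f0 := fun x => v x i)
    (fun n => mv (hwm n).1.1) (mv hv1) (tendsto_of_tendsto_of_tendsto_of_le_of_le
      tendsto_const_nhds hw1 (fun _ => zero_le) (fun n => eLpNorm_comp_le fun x =>
        PiLp.norm_apply_le ((w n - v) x) i)) hc1.aestronglyMeasurable hC2
  have t2 := tendsto_integral_mul_of_Lp hp (f := fun n x => smoothJac (w n) x i j)
    (f0 := fun x => Dv x i j)
    (fun n => mD (hwm n).1.2.1) (mD hv2) (tendsto_of_tendsto_of_tendsto_of_le_of_le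
      tendsto_const_nhds hw2 (fun _ => zero_le) (fun n => eLpNorm_comp_le fun x =>
        (norm_le_pi_norm ((smoothJac (w n) - Dv) x i) j).trans (norm_le_pi_norm _ i)))
      hφ.continuous.aestronglyMeasurable hC1
  have t3 := t2.neg
  refine tendsto_nhds_unique t1 (t3.congr fun n => ?_)
  exact (ibp_smooth (hw n) hφ i j).symm

lemma mollify_jac {d m : ℕ} {Ω : Set (Euc d)} (hΩo : IsOpen Ω) (hΩb : Bornology.IsBounded Ω)
    {p : ℝ≥0∞} (hp : 1 ≤ p) {v : Euc d → Euc m} {Dv : Euc d → Mat m d}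
    (hv : MemW1p0 Ω p v Dv)
    {ρ : Euc d → ℝ} (hρ : ContDiff ℝ (⊤ : ℕ∞) ρ) (hρc : HasCompactSupport ρ) :
    ContDiff ℝ (⊤ : ℕ∞) (fun z => ∫ y, ρ (z - y) • Ω.indicator v y) ∧
    ∀ z, smoothJac (fun z => ∫ y, ρ (z - y) • Ω.indicator v y) z =
      ∫ y, ρ (z - y) • Ω.indicator Dv y := by
  have hfin : IsFiniteMeasure (volume.restrict Ω) := ⟨by
    simpa using hΩb.measure_lt_top⟩
  have hvi : Integrable (Ω.indicator v) :=
    (integrable_indicator_iff hΩo.measurableSet).2 (hv.1.1.integrable hp)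
  have hDi : Integrable (Ω.indicator Dv) :=
    (integrable_indicator_iff hΩo.measurableSet).2 (hv.1.2.1.integrable hp)
  set L := (ContinuousLinearMap.lsmul ℝ ℝ : ℝ →L[ℝ] Euc m →L[ℝ] Euc m).flip with hL
  have hconv : (fun z => ∫ y, ρ (z - y) • Ω.indicator v y) =
      (convolution (Ω.indicator v) ρ L volume) := by
    ext1 z
    simp [convolution, hL]
  refine ⟨?_, ?_⟩
  · rw [hconv]
    exact hρc.contDiff_convolution_right L hvi.locallyIntegrable hρ
  · intro z
    have hρ1 : ContDiff ℝ 1 ρ := hρ.of_le (by norm_cast)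
    have hd := hρc.hasFDerivAt_convolution_right L hvi.locallyIntegrable hρ1 z
    rw [← hconv] at hd
    have hex : ConvolutionExists (Ω.indicator v) (fderiv ℝ ρ) (L.precompR (Euc d)) volume :=
      (hρc.fderiv ℝ).convolutionExists_right (L.precompR (Euc d)) hvi.locallyIntegrable
        (hρ.continuous_fderiv (by simp))
    have hI2 : Integrable (fun y => ρ (z - y) • Ω.indicator Dv y) := by
      obtain ⟨C, hC⟩ := hρ.continuous.bounded_above_of_compact_support hρc
      exact hDi.bdd_smul C (Continuous.aestronglyMeasurable (by fun_prop)) (Eventually.of_forall fun y => hC _)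
    ext i j
    have e1 : smoothJac (fun z => ∫ y, ρ (z - y) • Ω.indicator v y) z i j =
        ∫ y, Ω.indicator v y i * fderiv ℝ ρ (z - y) (EuclideanSpace.single j 1) := by
      unfold smoothJac
      rw [hd.fderiv]
      have h1 : (convolution (Ω.indicator v) (fderiv ℝ ρ) (L.precompR (Euc d)) volume z)
          (EuclideanSpace.single j 1) = ∫ y, fderiv ℝ ρ (z - y) (EuclideanSpace.single j 1) •
            Ω.indicator v y := by
        unfold convolution
        rw [ContinuousLinearMap.integral_apply (hex z)]
        simp [hL, ContinuousLinearMap.precompR_apply]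
      rw [h1]
      have hIntg : Integrable (fun y => fderiv ℝ ρ (z - y) (EuclideanSpace.single j 1) •
            Ω.indicator v y) := by
        have := (hex z).apply_continuousLinearMap (EuclideanSpace.single j (1:ℝ))
        refine this.congr (Eventually.of_forall fun y => ?_)
        simp [hL, ContinuousLinearMap.precompR_apply]
      have h2 := (EuclideanSpace.proj (𝕜 := ℝ) (ι := Fin m) i).integral_comp_comm hIntg
      rw [show (∫ y, fderiv ℝ ρ (z - y) (EuclideanSpace.single j 1) • Ω.indicator v y).ofLp i =
        (EuclideanSpace.proj (𝕜 := ℝ) (ι := Fin m) i) (∫ y, fderiv ℝ ρ (z - y) (EuclideanSpace.single j 1) • Ω.indicator v y) from rfl, ← h2]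
      congr 1; ext y; simp [mul_comm]
    have e2 : (∫ y, ρ (z - y) • Ω.indicator Dv y) i j =
        ∫ y, Ω.indicator Dv y i j * ρ (z - y) := by
      have h2 := ((ContinuousLinearMap.proj (R := ℝ) (φ := fun _ : Fin d => ℝ) j).comp
        (ContinuousLinearMap.proj (R := ℝ) (φ := fun _ : Fin m => Fin d → ℝ) i)).integral_comp_comm hI2
      rw [show (∫ y, ρ (z - y) • Ω.indicator Dv y) i j =
        ((ContinuousLinearMap.proj (R := ℝ) (φ := fun _ : Fin d => ℝ) j).comp
        (ContinuousLinearMap.proj (R := ℝ) (φ := fun _ : Fin m => Fin d → ℝ) i))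
          (∫ y, ρ (z - y) • Ω.indicator Dv y) from rfl, ← h2]
      congr 1; ext y; simp [mul_comm]
    rw [e1, e2]
    have hφ : ContDiff ℝ (⊤ : ℕ∞) (fun y => ρ (z - y)) := hρ.comp (by fun_prop)
    have hφc : HasCompactSupport (fun y => ρ (z - y)) :=
      hρc.comp_homeomorph (Homeomorph.subLeft z)
    have key := ibp_limit hΩb hp hv hφ hφc i j
    have hder : ∀ y, fderiv ℝ (fun y => ρ (z - y)) y (EuclideanSpace.single j 1) =
        - fderiv ℝ ρ (z - y) (EuclideanSpace.single j 1) := by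
      intro y
      have h1 : HasFDerivAt ρ (fderiv ℝ ρ (z - y)) (z - y) :=
        (hρ.differentiable (by simp) _).hasFDerivAt
      have h2 : HasFDerivAt (fun y : Euc d => z - y) (-ContinuousLinearMap.id ℝ (Euc d)) y :=
        (hasFDerivAt_id y).const_sub z
      have h3 := (h1.comp y h2).fderiv
      have h4 : fderiv ℝ (fun y => ρ (z - y)) y = _ := h3
      rw [h4]; simp
    simp_rw [hder, mul_neg, integral_neg] at key
    have i1 : ∀ y, Ω.indicator v y i * fderiv ℝ ρ (z - y) (EuclideanSpace.single j 1) =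
      Ω.indicator (fun y => v y i * fderiv ℝ ρ (z - y) (EuclideanSpace.single j 1)) y := by
      intro y; by_cases hy : y ∈ Ω <;> simp [hy]
    have i2 : ∀ y, Ω.indicator Dv y i j * ρ (z - y) =
      Ω.indicator (fun y => Dv y i j * ρ (z - y)) y := by
      intro y; by_cases hy : y ∈ Ω <;> simp [hy]
    simp_rw [i1, i2, integral_indicator hΩo.measurableSet]
    linarith

lemma jac_comp_bound {d m : ℕ} {h : Euc d → Euc m} {Φ : Euc d → Euc d}
    (hh : ContDiff ℝ (⊤ : ℕ∞) h) (hΦ : ContDiff ℝ (⊤ : ℕ∞) Φ) (x : Euc d) :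
    ‖smoothJac (fun x => h (Φ x)) x - smoothJac h (Φ x)‖ ≤
      d * ‖fderiv ℝ Φ x - ContinuousLinearMap.id ℝ (Euc d)‖ * ‖smoothJac h (Φ x)‖ := by
  have h1 : HasFDerivAt h (fderiv ℝ h (Φ x)) (Φ x) := (hh.differentiable (by simp) _).hasFDerivAt
  have h2 : HasFDerivAt Φ (fderiv ℝ Φ x) x := (hΦ.differentiable (by simp) _).hasFDerivAt
  have h3 : fderiv ℝ (fun x => h (Φ x)) x = _ := (h1.comp x h2).fderiv
  refine (pi_norm_le_iff_of_nonneg (by positivity)).2 fun i =>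
    (pi_norm_le_iff_of_nonneg (by positivity)).2 fun j => ?_
  set w := (fderiv ℝ Φ x - ContinuousLinearMap.id ℝ (Euc d)) (EuclideanSpace.single j 1) with hw
  have hwn : ‖w‖ ≤ ‖fderiv ℝ Φ x - ContinuousLinearMap.id ℝ (Euc d)‖ := by
    refine (ContinuousLinearMap.le_opNorm _ _).trans ?_
    simp
  have e : (smoothJac (fun x => h (Φ x)) x - smoothJac h (Φ x)) i j = (fderiv ℝ h (Φ x) w) i := by
    simp only [Pi.sub_apply, smoothJac, h3, hw, ContinuousLinearMap.sub_apply, map_sub]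
    simp
  have ew : w = ∑ l, w l • EuclideanSpace.single l (1:ℝ) := by
    ext a
    simp [Finset.sum_apply, Pi.single_apply]
  have e2 : (fderiv ℝ h (Φ x) w) i = ∑ l, w l * smoothJac h (Φ x) i l := by
    conv_lhs => rw [ew]
    simp [smoothJac]
  rw [e, e2]
  refine (norm_sum_le _ _).trans ?_
  have : ∀ l ∈ Finset.univ, ‖w l * smoothJac h (Φ x) i l‖ ≤
      ‖fderiv ℝ Φ x - ContinuousLinearMap.id ℝ (Euc d)‖ * ‖smoothJac h (Φ x)‖ := by
    intro l _
    rw [norm_mul]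
    gcongr
    · exact (PiLp.norm_apply_le w l).trans hwn
    · exact (norm_le_pi_norm (smoothJac h (Φ x) i) l).trans (norm_le_pi_norm (smoothJac h (Φ x)) i)
  refine (Finset.sum_le_sum this).trans ?_
  simp [mul_assoc]

/-- data produced by the mollification at one scale -/
lemma approx_step {d m : ℕ} {Ω : Set (Euc d)} (hΩo : IsOpen Ω) (hΩb : Bornology.IsBounded Ω)
    {p : ℝ} (hp : 1 ≤ p) {v : Euc d → Euc m} {Dv : Euc d → Mat m d}
    (hv : MemW1p0 Ω (ENNReal.ofReal p) v Dv)
    {μ : Measure (Euc d)} [IsFiniteMeasure μ]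
    (hμ : ∀ x r, μ (ball x r) = ∫⁻ y in ball x r, ‖Ω.indicator Dv y‖ₑ ^ p)
    {c K B C1 ε : ℝ} (hc : 0 < c) (hB : 0 ≤ B) (hC1 : 0 ≤ C1) (hε : 0 < ε)
    {Φ : Euc d → Euc d} (hΦ : ContDiff ℝ (⊤ : ℕ∞) Φ) (hΦ1 : ∀ x, ‖Φ x - x‖ + c * ε ≤ K * ε)
    (hΦ2 : ∃ ρ, 0 < ρ ∧ ∀ x, ¬ (ball x ρ ⊆ Ω) → Disjoint (ball (Φ x) (c * ε)) Ω)
    (hΦ3 : ∀ x, ‖fderiv ℝ Φ x - ContinuousLinearMap.id ℝ (Euc d)‖ ≤ B * ε)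
    (hΦ4 : ∀ x, fderiv ℝ Φ x ≠ ContinuousLinearMap.id ℝ (Euc d) →
      μ.real (ball x (K * ε)) ≤ C1 * ε) {S : ℝ}
    (hS : S = 1 / ((c * ε / 2) ^ d * volume.real (ball (0 : Euc d) 1))) :
    ∃ (k : Euc d → Euc d → ℝ) (V : Euc d → Euc m), IsAvgKer k S (K * ε) ∧ IsCcSmooth Ω V ∧
      (∀ x, V x = ∫ y, k x y • Ω.indicator v y) ∧
      ∀ x, ‖smoothJac V x - ∫ y, k x y • Ω.indicator Dv y‖ ≤
        d * (B * ε) * (S * (C1 * ε)) ^ (1 / p) := by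
  have hp' : 1 ≤ ENNReal.ofReal p := by simpa using hp
  have hp0 : 0 < p := by linarith
  have hcε : 0 < c * ε := by positivity
  let b : ContDiffBump (0 : Euc d) := ⟨c * ε / 2, c * ε, by positivity, by linarith⟩
  set ρ := b.normed volume with hρdef
  have hρ : ContDiff ℝ (⊤ : ℕ∞) ρ := b.contDiff_normed
  have hρc : HasCompactSupport ρ := b.hasCompactSupport_normed
  have hρs : Function.support ρ = ball 0 (c * ε) := b.support_normed_eq
  have hvb : 0 < volume.real (ball (0 : Euc d) 1) := by
    rw [measureReal_def]
    exact ENNReal.toReal_pos (measure_ball_pos _ _ one_pos).ne' measure_ball_lt_top.ne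
  have hS0 : 0 ≤ S := by rw [hS]; positivity
  have hk : IsAvgKer (fun x y => ρ (Φ x - y)) S (K * ε) := by
    refine ⟨fun x y => b.nonneg_normed _, ?_, ?_, ?_, ?_⟩
    · have := hρ.continuous
      have := hΦ.continuous
      simp only [Function.uncurry_def]
      fun_prop
    · intro x
      rw [lintegral_sub_left_eq_self (fun y => ENNReal.ofReal (ρ y)),
        ← ofReal_integral_eq_lintegral_ofReal b.integrable_normed
          (Eventually.of_forall fun y => b.nonneg_normed _), b.integral_normed]
      simp
    · intro x y
      refine (b.normed_le_div_measure_closedBall_rIn volume _).trans ?_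
      rw [hS, measureReal_def, measureReal_def]
      have : volume (closedBall (0 : Euc d) b.rIn) = ENNReal.ofReal ((c * ε / 2) ^ d) *
          volume (ball (0 : Euc d) 1) := by
        rw [Measure.addHaar_closedBall _ _ (by positivity : (0:ℝ) ≤ c * ε / 2)]
        simp
      rw [this, ENNReal.toReal_mul, ENNReal.toReal_ofReal (by positivity)]
    · intro x y hxy
      have : Φ x - y ∈ ball (0 : Euc d) (c * ε) := by rw [← hρs]; exact hxy
      rw [mem_ball_zero_iff] at this
      rw [mem_ball, dist_comm, dist_eq_norm]
      have h2 := norm_sub_le_norm_sub_add_norm_sub x (Φ x) y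
      have h3 := hΦ1 x
      rw [norm_sub_rev] at h3
      linarith
  obtain ⟨hh, hJ⟩ := mollify_jac hΩo hΩb hp' hv hρ hρc
  set h := fun z => ∫ y, ρ (z - y) • Ω.indicator v y with hhdef
  have hDm : AEStronglyMeasurable (Ω.indicator Dv) volume :=
    (aestronglyMeasurable_indicator_iff hΩo.measurableSet).2 hv.1.2.1.1
  refine ⟨fun x y => ρ (Φ x - y), fun x => h (Φ x), hk, ⟨hh.comp hΦ, ?_⟩, fun x => rfl, ?_⟩
  · obtain ⟨r, hr, hr2⟩ := hΦ2
    set T := {x : Euc d | ball x r ⊆ Ω} with hT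
    have hTc : IsClosed T := by
      rw [← isOpen_compl_iff]
      have : Tᶜ = ⋃ y ∈ Ωᶜ, ball y r := by
        ext x
        simp only [hT, mem_compl_iff, mem_setOf_eq, not_subset, mem_iUnion, mem_ball, exists_prop]
        constructor
        · rintro ⟨y, h1, h2⟩; exact ⟨y, h2, by rwa [dist_comm]⟩
        · rintro ⟨y, h1, h2⟩; exact ⟨y, by rwa [dist_comm], h1⟩
      rw [this]
      exact isOpen_biUnion fun _ _ => isOpen_ball
    have hTΩ : T ⊆ Ω := fun x hx => hx (mem_ball_self hr)
    have hsub : Function.support (fun x => h (Φ x)) ⊆ T := by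
      intro x hx
      by_contra hxT
      apply hx
      have hdis := hr2 x hxT
      simp only [hhdef]
      refine integral_eq_zero_of_ae (Eventually.of_forall fun y => ?_)
      by_cases hy : y ∈ Ω
      · have : ρ (Φ x - y) = 0 := by
          by_contra h0
          have h1 : Φ x - y ∈ ball (0 : Euc d) (c * ε) := by rw [← hρs]; exact h0
          refine hdis.notMem_of_mem_right hy ?_
          rw [mem_ball, dist_comm, dist_eq_norm]
          simpa using h1
        simp [this]
      · simp [hy]
    have hts : tsupport (fun x => h (Φ x)) ⊆ T := closure_minimal hsub hTc
    refine ⟨?_, hts.trans hTΩ⟩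
    exact isCompact_of_isClosed_isBounded (isClosed_tsupport _) (hΩb.subset (hts.trans hTΩ))
  · intro x
    have hjb := jac_comp_bound hh hΦ x
    rw [hJ] at hjb
    refine hjb.trans ?_
    by_cases hid : fderiv ℝ Φ x = ContinuousLinearMap.id ℝ (Euc d)
    · rw [hid]; simp only [sub_self, norm_zero, mul_zero, zero_mul]; positivity
    · have hm := hΦ4 x hid
      gcongr
      · exact hΦ3 x
      · have hsb := hk.sup_bound hDm hp x
        rw [← hμ] at hsb
        have h1 : ‖∫ y, ρ (Φ x - y) • Ω.indicator Dv y‖ₑ ^ p ≤ ENNReal.ofReal (S * (C1 * ε)) := by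
          refine hsb.trans ?_
          rw [ENNReal.ofReal_mul hS0]
          gcongr
          rw [← ofReal_measureReal]
          exact ENNReal.ofReal_le_ofReal hm
        rw [← ofReal_norm, ENNReal.ofReal_rpow_of_nonneg (norm_nonneg _) hp0.le] at h1
        have h2 := (ENNReal.ofReal_le_ofReal_iff (by positivity)).1 h1
        have h3 := Real.rpow_le_rpow (by positivity) h2 (by positivity : 0 ≤ 1 / p)
        rwa [← Real.rpow_mul (norm_nonneg _), mul_one_div_cancel hp0.ne', Real.rpow_one] at h3

lemma kappa_tendsto {d : ℕ} {p : ℝ} (hp : 1 ≤ p) (hpd : (d : ℝ) - 1 < p) {c B C1 w : ℝ}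
    (hc : 0 < c) (hC1 : 0 ≤ C1) (hw : 0 < w) :
    Tendsto (fun ε : ℝ => d * (B * ε) * (1 / ((c * ε / 2) ^ d * w) * (C1 * ε)) ^ (1 / p))
      (𝓝[>] 0) (𝓝 0) := by
  have hp0 : 0 < p := by linarith
  set A : ℝ := 1 / ((c / 2) ^ d * w) * C1 with hA
  have hA0 : 0 ≤ A := by positivity
  set q : ℝ := 1 + (1 - d) / p with hq
  have hq0 : 0 < q := by
    rw [hq]
    have : 1 + (1 - (d : ℝ)) / p = (p - (d - 1)) / p := by field_simp; ring
    rw [this]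
    apply div_pos <;> linarith
  have key : ∀ ε ∈ Ioi (0 : ℝ), d * B * A ^ (1 / p) * ε ^ q =
      d * (B * ε) * (1 / ((c * ε / 2) ^ d * w) * (C1 * ε)) ^ (1 / p) := by
    intro ε hε
    have hε : 0 < ε := hε
    have e1 : 1 / ((c * ε / 2) ^ d * w) * (C1 * ε) = A * ε ^ (1 - (d : ℝ)) := by
      rw [Real.rpow_sub hε, Real.rpow_one, Real.rpow_natCast, hA]
      have : (c * ε / 2) ^ d = (c / 2) ^ d * ε ^ d := by rw [← mul_pow]; ring
      rw [this]
      field_simp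
    rw [e1, Real.mul_rpow hA0 (by positivity), ← Real.rpow_mul hε.le, hq, Real.rpow_add hε,
      Real.rpow_one, mul_one_div]
    ring
  have t : Tendsto (fun ε : ℝ => d * B * A ^ (1 / p) * ε ^ q) (𝓝[>] 0) (𝓝 0) := by
    have : Tendsto (fun ε : ℝ => ε ^ q) (𝓝 0) (𝓝 (0 ^ q)) :=
      (Real.continuousAt_rpow_const 0 q (Or.inr hq0.le))
    rw [Real.zero_rpow hq0.ne'] at this
    simpa using (this.mono_left nhdsWithin_le_nhds).const_mul (d * B * A ^ (1 / p))
  exact t.congr' (eventually_of_mem self_mem_nhdsWithin key)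

lemma approx_seq {d m : ℕ} {Ω : Set (Euc d)} (hΩo : IsOpen Ω) (hΩb : Bornology.IsBounded Ω)
    (hΩl : HasLipschitzBoundary Ω)
    {p : ℝ} (hp : 1 ≤ p) (hpd : (d : ℝ) - 1 < p) {v : Euc d → Euc m} {Dv : Euc d → Mat m d}
    (hv : MemW1p0 Ω (ENNReal.ofReal p) v Dv) :
    ∃ (k : ℕ → Euc d → Euc d → ℝ) (S R : ℕ → ℝ) (V : ℕ → Euc d → Euc m) (κ : ℕ → ℝ) (C : ℝ),
      (∀ n, IsAvgKer (k n) (S n) (R n)) ∧ (∀ n, 0 < R n) ∧ (∀ n, 0 ≤ S n) ∧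
      Tendsto R atTop (𝓝 0) ∧ 0 ≤ C ∧ (∀ n, S n * R n ^ d ≤ C) ∧
      (∀ n, IsCcSmooth Ω (V n)) ∧ (∀ n x, V n x = ∫ y, k n x y • Ω.indicator v y) ∧
      Tendsto κ atTop (𝓝 0) ∧
      ∀ n x, ‖smoothJac (V n) x - ∫ y, k n x y • Ω.indicator Dv y‖ ≤ κ n := by
  have hp0 : 0 < p := by linarith
  have hDl : MemLp (Ω.indicator Dv) (ENNReal.ofReal p) volume :=
    (memLp_indicator_iff_restrict hΩo.measurableSet).2 hv.1.2.1
  set μ : Measure (Euc d) := volume.withDensity (fun y => ‖Ω.indicator Dv y‖ₑ ^ p) with hμdef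
  have hfin : IsFiniteMeasure μ := by
    refine isFiniteMeasure_withDensity ?_
    have := lintegral_rpow_enorm_lt_top_of_eLpNorm_lt_top (by simpa using hp0) ENNReal.ofReal_ne_top hDl.2
    rw [ENNReal.toReal_ofReal hp0.le] at this
    exact this.ne
  have hμ : ∀ x r, μ (ball x r) = ∫⁻ y in ball x r, ‖Ω.indicator Dv y‖ₑ ^ p := fun x r =>
    withDensity_apply _ measurableSet_ball
  obtain ⟨c, K, B, C1, hc, hK, hB, hC1, hev⟩ := geo hΩo hΩb hΩl μ
  have hvb : 0 < volume.real (ball (0 : Euc d) 1) := by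
    rw [measureReal_def]
    exact ENNReal.toReal_pos (measure_ball_pos _ _ one_pos).ne' measure_ball_lt_top.ne
  have hev2 := hev.and self_mem_nhdsWithin
  obtain ⟨ε, hεt, hε⟩ := exists_seq_forall_of_frequently (hev2.frequently)
  choose hex hε0 using hε
  have hε0 : ∀ n, 0 < ε n := hε0
  choose Φ h1 h2 h3 h4 h5 using hex
  choose k V hk hV hVk hJ using fun n => approx_step hΩo hΩb hp hv hμ hc hB hC1 (hε0 n) (h1 n)
    (h2 n) (h3 n) (h4 n) (h5 n) rfl
  refine ⟨k, _, _, V, _, (2 * K / c) ^ d / volume.real (ball (0 : Euc d) 1), hk, fun n => by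
    have := hε0 n
    positivity, fun n => ?_, ?_, by positivity, fun n => ?_, hV, hVk,
    (kappa_tendsto hp hpd hc hC1 hvb (B := B)).comp hεt, hJ⟩
  · have := hε0 n
    positivity
  · have := (hεt.mono_right nhdsWithin_le_nhds).const_mul K
    simpa using this
  · have := hε0 n
    apply le_of_eq
    have e1 : (c * ε n / 2) ^ d = (c / 2) ^ d * ε n ^ d := by rw [← mul_pow]; ring
    have e2 : (2 * K / c) ^ d = K ^ d / (c / 2) ^ d := by rw [← div_pow]; congr 1; field_simp
    rw [e1, e2, mul_pow]
    field_simp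

lemma norm_le_frob {m d : ℕ} (ξ : Mat m d) : ‖ξ‖ ≤ frobNorm ξ := by
  refine (pi_norm_le_iff_of_nonneg (Real.sqrt_nonneg _)).2 fun i =>
    (pi_norm_le_iff_of_nonneg (Real.sqrt_nonneg _)).2 fun j => ?_
  rw [Real.norm_eq_abs]
  refine Real.abs_le_sqrt ?_
  refine le_trans ?_ (Finset.single_le_sum (f := fun i => ∑ j, ξ i j ^ 2)
    (fun i _ => Finset.sum_nonneg fun j _ => sq_nonneg _) (Finset.mem_univ i))
  exact Finset.single_le_sum (f := fun j => ξ i j ^ 2) (fun j _ => sq_nonneg _) (Finset.mem_univ j)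

lemma frob_le {m d : ℕ} (ξ : Mat m d) : frobNorm ξ ≤ ((m : ℝ) * d + 1) * ‖ξ‖ := by
  unfold frobNorm
  rw [Real.sqrt_le_left (by positivity)]
  have h : ∀ i j, ξ i j ^ 2 ≤ ‖ξ‖ ^ 2 := by
    intro i j
    rw [← sq_abs]
    have : |ξ i j| ≤ ‖ξ‖ := (norm_le_pi_norm (ξ i) j).trans (norm_le_pi_norm ξ i)
    gcongr
  calc ∑ i, ∑ j, ξ i j ^ 2 ≤ ∑ _i : Fin m, ∑ _j : Fin d, ‖ξ‖ ^ 2 :=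
        Finset.sum_le_sum fun i _ => Finset.sum_le_sum fun j _ => h i j
    _ = (m : ℝ) * d * ‖ξ‖ ^ 2 := by simp [mul_assoc]
    _ ≤ _ := by
      rw [mul_pow]
      gcongr
      nlinarith [(by positivity : (0:ℝ) ≤ (m : ℝ) * d)]

/-- Pointwise properties of the integrand at a good point. -/
structure PW {m d : ℕ} (f : Mat m d → ℝ≥0∞) (θ : ℝ) (K : ℝ≥0∞) : Prop where
  conv : ConvexENNReal f
  lsc : LowerSemicontinuous f
  bdd : ∀ e, ‖e‖ < θ → f e ≤ K
  fin : K < ⊤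

lemma exists_K0 {d m : ℕ} {Ω : Set (Euc d)} {p : ℝ}
    (hpd : (d : ℝ) - 1 < p) {W : Euc d → Mat m d → ℝ≥0∞} (hW : Assumption1 Ω p W) :
    ∃ (θ : ℝ) (K0 : Euc d → ℝ≥0∞), 0 < θ ∧ Measurable K0 ∧ (∫⁻ x in Ω, K0 x) < ⊤ ∧
      ∀ᵐ x ∂volume.restrict Ω, PW (W x) θ (K0 x) := by
  obtain ⟨hm, hcl, -, ⟨-, h3⟩, -⟩ := hW
  obtain ⟨θ, hθ, hIntg⟩ := h3 hpd
  set c : ℝ := (m : ℝ) * d + 1 with hc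
  have hc0 : 0 < c := by positivity
  let q : ℕ → Mat m d := TopologicalSpace.denseSeq (Mat m d)
  have hq : DenseRange q := TopologicalSpace.denseRange_denseSeq _
  classical
  let K0 : Euc d → ℝ≥0∞ := fun x => ⨆ n, if ‖q n‖ < θ / c then W x (q n) else 0
  have hK0m : Measurable K0 := by
    refine Measurable.iSup fun n => ?_
    split_ifs
    · exact hm.comp (by fun_prop : Measurable fun x : Euc d => (x, q n))
    · exact measurable_const
  have hK0i : (∫⁻ x in Ω, K0 x) < ⊤ := by
    refine lt_of_le_of_lt (lintegral_mono fun x => ?_) hIntg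
    refine iSup_le fun n => ?_
    split_ifs with h
    · refine le_iSup₂_of_le (q n) ?_ le_rfl
      have := frob_le (q n)
      rw [lt_div_iff₀ hc0] at h
      show frobNorm (q n) ≤ θ
      rw [mul_comm] at h
      linarith
    · exact zero_le
  refine ⟨θ / c, K0, by positivity, hK0m, hK0i, ?_⟩
  filter_upwards [hcl, ae_lt_top hK0m hK0i.ne] with x hx hfin
  refine ⟨hx.1, hx.2, fun e he => ?_, hfin⟩
  by_contra! hlt
  have ho : IsOpen ({y | K0 x < W x y} ∩ ball 0 (θ / c)) :=
    (hx.2.isOpen_preimage (K0 x)).inter isOpen_ball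
  obtain ⟨n, hn1, hn2⟩ := hq.exists_mem_open ho ⟨e, hlt, by simpa using he⟩
  have : W x (q n) ≤ K0 x := by
    refine le_iSup_of_le n ?_
    rw [if_pos (by simpa using hn2)]
  exact absurd hn1 (not_lt.2 this)

namespace PW
variable {m d : ℕ} {f : Mat m d → ℝ≥0∞} {θ : ℝ} {K : ℝ≥0∞}

lemma shift' (h : PW f θ K) {r : ℝ} (hr : 0 ≤ r) (hr1 : r < 1) (ξ : Mat m d) {e : Mat m d}
    (he : ‖e‖ < (1 - r) * θ) :
    f (r • ξ + e) ≤ ENNReal.ofReal r * f ξ + ENNReal.ofReal (1 - r) * K := by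
  have h0 : 0 < 1 - r := by linarith
  have e1 : r • ξ + e = r • ξ + (1 - r) • ((1 - r)⁻¹ • e) := by
    rw [smul_inv_smul₀ h0.ne']
  rw [e1]
  refine (h.conv _ _ r hr hr1.le).trans ?_
  gcongr
  refine h.bdd _ ?_
  rw [norm_smul, Real.norm_of_nonneg (by positivity), inv_mul_lt_iff₀ h0]
  exact he

lemma shift (h : PW f θ K) {r : ℝ} (hr : 0 ≤ r) (hr1 : r < 1) (ξ : Mat m d) {e : Mat m d}
    (he : ‖e‖ < (1 - r) * θ) :
    f (r • ξ + e) ≤ f ξ + K := by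
  refine (h.shift' hr hr1 ξ he).trans ?_
  gcongr
  · refine mul_le_of_le_one_left zero_le ?_
    simpa using hr1.le
  · refine mul_le_of_le_one_left zero_le ?_
    simpa using hr

lemma minorant (h : PW f θ K) (hθ : 0 < θ) (q : ℕ → Mat m d) (hq : DenseRange q)
    {L : Mat m d →ₗ[ℝ] ℝ} {c : ℝ} (hL : ∀ n, ENNReal.ofReal (L (q n) + c) ≤ f (q n))
    (η : Mat m d) : ENNReal.ofReal (L η + c) ≤ f η := by
  have hLc : Continuous L := L.continuous_of_finiteDimensional
  by_cases hη : f η = ⊤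
  · rw [hη]; exact le_top
  have key : ∀ t ∈ Ioo (0:ℝ) 1, ENNReal.ofReal (L (t • η) + c) ≤
      ENNReal.ofReal t * f η + ENNReal.ofReal (1 - t) * K := by
    intro t ht
    set b := ENNReal.ofReal t * f η + ENNReal.ofReal (1 - t) * K with hb
    by_contra! hlt
    have hc : Continuous fun z => ENNReal.ofReal (L z + c) :=
      ENNReal.continuous_ofReal.comp (by fun_prop)
    have ho : IsOpen ({z | b < ENNReal.ofReal (L z + c)} ∩ ball (t • η) ((1 - t) * θ)) :=
      (isOpen_lt continuous_const hc).inter isOpen_ball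
    obtain ⟨n, hn1, hn2⟩ := hq.exists_mem_open ho
      ⟨t • η, hlt, mem_ball_self (mul_pos (by linarith [ht.2]) hθ)⟩
    have h1 := h.shift' ht.1.le ht.2 η (e := q n - t • η) (by simpa [dist_eq_norm] using hn2)
    rw [add_sub_cancel] at h1
    exact absurd hn1 (not_lt.2 ((hL n).trans h1))
  have t1 : Tendsto (fun t : ℝ => ENNReal.ofReal (L (t • η) + c)) (𝓝[<] 1)
      (𝓝 (ENNReal.ofReal (L η + c))) := by
    have hc : Continuous fun t : ℝ => ENNReal.ofReal (L (t • η) + c) :=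
      ENNReal.continuous_ofReal.comp (by fun_prop)
    have := hc.tendsto 1
    rw [one_smul] at this
    exact this.mono_left nhdsWithin_le_nhds
  have t2 : Tendsto (fun t : ℝ => ENNReal.ofReal t * f η + ENNReal.ofReal (1 - t) * K) (𝓝[<] 1)
      (𝓝 (f η)) := by
    have a1 : Tendsto (fun t : ℝ => ENNReal.ofReal t) (𝓝 1) (𝓝 1) := by
      simpa using (ENNReal.continuous_ofReal.tendsto 1)
    have a2 : Tendsto (fun t : ℝ => ENNReal.ofReal (1 - t)) (𝓝 1) (𝓝 0) := by
      have hc : Continuous (fun t : ℝ => ENNReal.ofReal (1 - t)) :=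
        ENNReal.continuous_ofReal.comp (by fun_prop)
      simpa using hc.tendsto 1
    have := (ENNReal.Tendsto.mul_const a1 (b := f η) (Or.inr hη)).add
      (ENNReal.Tendsto.mul_const a2 (b := K) (Or.inr h.fin.ne))
    simp only [one_mul, zero_mul, add_zero] at this
    exact this.mono_left nhdsWithin_le_nhds
  refine le_of_tendsto_of_tendsto t1 t2 ?_
  filter_upwards [Ioo_mem_nhdsLT (zero_lt_one' ℝ)] with t ht
  exact key t ht

end PW

lemma essInf_le_self {d : ℕ} (Ω : Set (Euc d)) (f : Euc d → ℝ≥0∞) :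
    ∀ᵐ x ∂volume.restrict Ω, ∀ δ : ℝ, 0 < δ →
      essInf f (volume.restrict (closedBall x δ ∩ Ω)) ≤ f x := by
  have hB := TopologicalSpace.isBasis_countableBasis (Euc d)
  have key : ∀ b ∈ TopologicalSpace.countableBasis (Euc d), ∀ᵐ x ∂volume.restrict Ω,
      x ∈ b → essInf f (volume.restrict (b ∩ Ω)) ≤ f x := by
    intro b hb
    have hbm : MeasurableSet b := (hB.isOpen hb).measurableSet
    have h1 : ∀ᵐ x ∂(volume.restrict (b ∩ Ω)), essInf f (volume.restrict (b ∩ Ω)) ≤ f x :=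
      ae_essInf_le
    rw [← Measure.restrict_restrict hbm] at h1 ⊢
    exact (ae_restrict_iff' hbm).1 h1
  have key2 := (ae_ball_iff (TopologicalSpace.countable_countableBasis (Euc d))).2 key
  filter_upwards [key2] with x hx δ hδ
  obtain ⟨b, hb, hxb, hbs⟩ := hB.exists_subset_of_mem_open (mem_ball_self hδ) isOpen_ball
  refine le_trans ?_ (hx b hb hxb)
  refine essInf_antitone_measure ?_
  refine Measure.absolutelyContinuous_of_le (Measure.restrict_mono ?_ le_rfl)
  exact inter_subset_inter_left _ (hbs.trans ball_subset_closedBall)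

lemma biconj_jensen {d m : ℕ} {Ω : Set (Euc d)} {W : Euc d → Mat m d → ℝ≥0∞}
    {θ : ℝ} (hθ : 0 < θ) {K0 : Euc d → ℝ≥0∞}
    (hPW : ∀ᵐ x ∂volume.restrict Ω, PW (W x) θ (K0 x)) {x : Euc d} {δ : ℝ}
    {κ : Euc d → ℝ} (hκ : ∀ y, 0 ≤ κ y) (hκs : ∀ y, κ y ≠ 0 → y ∈ closedBall x δ)
    (hκi : IntegrableOn κ Ω) (hκ1 : ∫ y in Ω, κ y ≤ 1) {U : Euc d → Mat m d}
    (hU : IntegrableOn (fun y => κ y • U y) Ω) :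
    biconj (fun η => essInf (fun y => W y η) (volume.restrict (closedBall x δ ∩ Ω)))
      (∫ y in Ω, κ y • U y) ≤
      (∫⁻ y in Ω, ENNReal.ofReal (κ y) * W y (U y)) +
        essInf (fun y => W y 0) (volume.restrict (closedBall x δ ∩ Ω)) := by
  refine iSup_le fun L => iSup_le fun c => iSup_le fun hLc => ?_
  let q : ℕ → Mat m d := TopologicalSpace.denseSeq (Mat m d)
  have hq : DenseRange q := TopologicalSpace.denseRange_denseSeq _
  have hmin : ∀ᵐ y ∂volume.restrict Ω, y ∈ closedBall x δ → ∀ η,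
      ENNReal.ofReal (L η + c) ≤ W y η := by
    have h1 : ∀ᵐ y ∂(volume.restrict (closedBall x δ ∩ Ω)), ∀ n,
        ENNReal.ofReal (L (q n) + c) ≤ W y (q n) := by
      refine ae_all_iff.2 fun n => ?_
      have h2 : ∀ᵐ y ∂(volume.restrict (closedBall x δ ∩ Ω)),
        essInf (fun y => W y (q n)) (volume.restrict (closedBall x δ ∩ Ω)) ≤ W y (q n) :=
        ae_essInf_le
      filter_upwards [h2] with y hy
      exact (hLc (q n)).trans hy
    rw [← Measure.restrict_restrict measurableSet_closedBall] at h1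
    have h3 := (ae_restrict_iff' measurableSet_closedBall).1 h1
    filter_upwards [h3, hPW] with y hy hP hyb η
    exact hP.minorant hθ q hq (hy hyb) η
  let L' : Mat m d →L[ℝ] ℝ := LinearMap.toContinuousLinearMap L
  have hLU : Integrable (fun y => L (κ y • U y)) (volume.restrict Ω) :=
    L'.integrable_comp hU
  have e1 : L (∫ y in Ω, κ y • U y) = ∫ y in Ω, L (κ y • U y) :=
    (L'.integral_comp_comm hU).symm
  have hci : Integrable (fun y => c * κ y) (volume.restrict Ω) := hκi.const_mul c
  have e2 : L (∫ y in Ω, κ y • U y) + c =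
      (∫ y in Ω, (L (κ y • U y) + c * κ y)) + c * (1 - ∫ y in Ω, κ y) := by
    rw [integral_add hLU hci, e1, integral_const_mul]
    ring
  rw [e2]
  refine ENNReal.ofReal_add_le.trans ?_
  refine add_le_add ?_ ?_
  · have hi : Integrable (fun y => L (κ y • U y) + c * κ y) (volume.restrict Ω) := hLU.add hci
    have h1 : ∫ y in Ω, (L (κ y • U y) + c * κ y) ≤
        ∫ y in Ω, max (L (κ y • U y) + c * κ y) 0 :=
      integral_mono hi hi.pos_part fun y => le_max_left _ _
    refine (ENNReal.ofReal_le_ofReal h1).trans ?_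
    rw [ofReal_integral_eq_lintegral_ofReal hi.pos_part
      (Eventually.of_forall fun y => le_max_right _ _)]
    refine lintegral_mono_ae ?_
    filter_upwards [hmin] with y hy
    by_cases h0 : κ y = 0
    · simp [h0]
    · have h2 := hy (hκs y h0) (U y)
      have h3 : max (L (κ y • U y) + c * κ y) 0 = κ y * max (L (U y) + c) 0 := by
        rw [map_smul, mul_max_of_nonneg _ _ (hκ y)]
        simp; ring_nf
      rw [h3, ENNReal.ofReal_mul (hκ y)]
      gcongr
      rwa [ENNReal.ofReal_max, ENNReal.ofReal_zero, max_eq_left zero_le]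
  · have h0 := hLc 0
    rw [map_zero, zero_add] at h0
    refine le_trans ?_ h0
    have hk0 : 0 ≤ ∫ y in Ω, κ y := integral_nonneg hκ
    rcases le_total 0 c with hc | hc
    · exact ENNReal.ofReal_le_ofReal (by nlinarith)
    · rw [ENNReal.ofReal_of_nonpos (by nlinarith)]
      exact zero_le

lemma limit_abs {α : Type*} [MeasurableSpace α] {μ : Measure α} {g H : ℕ → α → ℝ≥0∞}
    {F Q Y : α → ℝ≥0∞} {D : ℝ≥0∞} (hD : D ≠ ⊤)
    (hg : ∀ n, AEMeasurable (g n) μ) (hH : ∀ n, AEMeasurable (H n) μ)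
    (hF : AEMeasurable F μ) (hQ : AEMeasurable Q μ) (hY : AEMeasurable Y μ)
    (hFi : ∫⁻ x, F x ∂μ ≠ ⊤) (hQi : ∫⁻ x, Q x ∂μ ≠ ⊤)
    (hdom : ∀ᶠ n in atTop, ∀ᵐ x ∂μ, g n x ≤ D * H n x + Q x)
    (hlim : ∀ᵐ x ∂μ, ∀ᶠ n in atTop, g n x ≤ Y x)
    (hHF : Tendsto (fun n => ∫⁻ x, (H n x - F x) ∂μ) atTop (𝓝 0))
    {η : ℝ≥0∞} (hη : 0 < η) :
    ∀ᶠ n in atTop, ∫⁻ x, g n x ∂μ ≤ ∫⁻ x, Y x ∂μ + η := by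
  have hbi : ∫⁻ x, (D * F x + Q x) ∂μ ≠ ⊤ := by
    rw [lintegral_add_right' _ hQ, lintegral_const_mul'' _ hF]
    exact ENNReal.add_ne_top.2 ⟨ENNReal.mul_ne_top hD hFi, hQi⟩
  have hbm : AEMeasurable (fun x => D * F x + Q x) μ := (hF.const_mul D).add hQ
  have t1 : Tendsto (fun n => ∫⁻ x, (min (g n x) (D * F x + Q x) - Y x) ∂μ) atTop (𝓝 0) := by
    have := tendsto_lintegral_of_dominated_convergence' (μ := μ)
      (F := fun n x => min (g n x) (D * F x + Q x) - Y x) (f := fun _ => 0)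
      (fun x => D * F x + Q x) (fun n => ((hg n).min hbm).sub hY)
      (fun n => Eventually.of_forall fun x => tsub_le_self.trans (min_le_right _ _)) hbi ?_
    · simpa using this
    · filter_upwards [hlim] with x hx
      refine tendsto_const_nhds.congr' ?_
      filter_upwards [hx] with n hn
      exact (tsub_eq_zero_of_le ((min_le_left _ _).trans hn)).symm
  have t2 : Tendsto (fun n => ∫⁻ x, (min (g n x) (D * F x + Q x) - Y x) ∂μ +
      D * ∫⁻ x, (H n x - F x) ∂μ) atTop (𝓝 0) := by
    have := t1.add (ENNReal.Tendsto.const_mul (a := D) hHF (Or.inr hD))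
    simpa using this
  filter_upwards [hdom, t2.eventually (ge_mem_nhds hη)] with n hn hn2
  calc ∫⁻ x, g n x ∂μ ≤ ∫⁻ x, (Y x + ((min (g n x) (D * F x + Q x) - Y x) + D * (H n x - F x))) ∂μ := by
        refine lintegral_mono_ae ?_
        filter_upwards [hn] with x hx
        have h1 : g n x ≤ min (g n x) (D * F x + Q x) + D * (H n x - F x) := by
          rcases le_total (g n x) (D * F x + Q x) with h | h
          · rw [min_eq_left h]; exact le_self_add
          · rw [min_eq_right h]
            refine hx.trans ?_
            have : H n x ≤ F x + (H n x - F x) := le_add_tsub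
            calc D * H n x + Q x ≤ D * (F x + (H n x - F x)) + Q x := by gcongr
              _ = _ := by ring
        refine h1.trans ?_
        rw [← add_assoc]
        gcongr
        exact le_add_tsub
    _ = ∫⁻ x, Y x ∂μ + (∫⁻ x, (min (g n x) (D * F x + Q x) - Y x) ∂μ +
      D * ∫⁻ x, (H n x - F x) ∂μ) := by
        have m1 : AEMeasurable (fun x => min (g n x) (D * F x + Q x) - Y x) μ :=
          ((hg n).min hbm).sub hY
        have m2 : AEMeasurable (fun x => H n x - F x) μ := (hH n).sub hF
        rw [lintegral_add_left' hY, lintegral_add_left' m1, lintegral_const_mul'' _ m2]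
    _ ≤ _ := by gcongr

lemma dom_point {d m : ℕ} {Ω : Set (Euc d)} {W : Euc d → Mat m d → ℝ≥0∞}
    {θ : ℝ} (hθ : 0 < θ) {K0 : Euc d → ℝ≥0∞}
    (hPW : ∀ᵐ x ∂volume.restrict Ω, PW (W x) θ (K0 x)) {x : Euc d} {R p M CM : ℝ} (hR : 0 < R)
    {α : ℝ≥0∞} (hP : PW (W x) θ (K0 x))
    (hess : ∀ δ : ℝ, 0 < δ →
      essInf (fun y => W y 0) (volume.restrict (closedBall x δ ∩ Ω)) ≤ W x 0)
    {k : Euc d → ℝ} (hk : ∀ y, 0 ≤ k y) (hks : ∀ y, k y ≠ 0 → y ∈ ball x R)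
    (hki : Integrable k) (hk1 : ∫ y, k y = 1)
    (U : Euc d → Mat m d) (hU : IntegrableOn (fun y => k y • U y) Ω)
    (hstab : ∀ ξ : Mat m d, frobNorm ξ ≤ M * R ^ (-(d : ℝ) / p) →
      W x ξ ≤ ENNReal.ofReal CM *
          biconj (fun η => essInf (fun y => W y η) (volume.restrict (closedBall x R ∩ Ω))) ξ + α)
    {t s s' : ℝ} (ht : 0 < t) (ht1 : t < 1) (hs' : 1 < s') (hs : s' < s) {G J : Mat m d}
    (he : ‖G + t • J - (t • (∫ y in Ω, k y • U y) + (1 - t * ∫ y in Ω, k y) • G)‖ <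
      (1 - t) / s' * ((1 - s' / s) * θ))
    (hA : ((m : ℝ) * d + 1) * ((1 - 1 / s')⁻¹ * ‖∫ y in Ω, k y • U y‖) ≤ M * R ^ (-(d : ℝ) / p)) :
    W x (G + t • J) ≤ ENNReal.ofReal CM * (ENNReal.ofReal (1 - 1 / s')⁻¹ *
      (∫⁻ y in Ω, ENNReal.ofReal (k y) * W y (U y)) + K0 x) + α + (W x (s • G) + K0 x) := by
  set A := ∫ y in Ω, k y • U y with hAdef
  set l := ∫ y in Ω, k y with hl
  have hs0 : 0 < s' := by linarith
  have hl0 : 0 ≤ l := integral_nonneg hk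
  have hl1 : l ≤ 1 := by
    rw [← hk1]
    exact setIntegral_le_integral hki (Eventually.of_forall hk)
  set σ := 1 - 1 / s' with hσ
  have hσ0 : 0 < σ := by
    rw [hσ, sub_pos, div_lt_one hs0]; exact hs'
  have hσ1 : 1 - σ = 1 / s' := by rw [hσ]; ring
  have hσ2 : σ < 1 := by have : 0 < 1 / s' := by positivity
                         linarith
  have htl : t * l ≤ t := mul_le_of_le_one_right ht.le hl1
  have htl0 : 0 ≤ t * l := by positivity
  set a := t * l + σ * (1 - t * l) with ha
  have ha1 : 1 - a = (1 - t * l) / s' := by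
    rw [ha, hσ]; field_simp; ring
  have haσ : σ ≤ a := by rw [ha]; nlinarith
  have ha0 : 0 < a := by linarith
  have h1a : (1 - t) / s' ≤ 1 - a := by rw [ha1]; gcongr
  have h1a0 : 0 < 1 - a := lt_of_lt_of_le (div_pos (by linarith) hs0) h1a
  set e := G + t • J - (t • A + (1 - t * l) • G) with hedef
  have hta : t / a ≤ σ⁻¹ := by
    rw [div_le_iff₀ ha0, ← div_eq_inv_mul, le_div_iff₀ hσ0]
    nlinarith
  have hta0 : 0 ≤ t / a := by positivity
  have hdec : G + t • J = a • ((t / a) • A) + (1 - a) • (s' • G + (1 - a)⁻¹ • e) := by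
    have q1 : a • ((t / a) • A) = t • A := by
      rw [smul_smul, mul_div_cancel₀ _ ha0.ne']
    have q2 : (1 - a) • (s' • G) = (1 - t * l) • G := by
      rw [smul_smul, ha1, div_mul_cancel₀ _ hs0.ne']
    rw [smul_add, q1, q2, smul_inv_smul₀ h1a0.ne', hedef]
    abel
  rw [hdec]
  refine (hP.conv _ _ a ha0.le (by linarith)).trans ?_
  have hle1 : ∀ {b : ℝ} {z : ℝ≥0∞}, b ≤ 1 → ENNReal.ofReal b * z ≤ z := fun hb =>
    mul_le_of_le_one_left zero_le (by simpa using hb)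
  refine (add_le_add (hle1 (by linarith)) (hle1 (by linarith))).trans ?_
  refine add_le_add ?_ ?_
  · have hfr : frobNorm ((t / a) • A) ≤ M * R ^ (-(d : ℝ) / p) := by
      refine (frob_le _).trans (le_trans ?_ hA)
      rw [norm_smul, Real.norm_of_nonneg hta0]
      gcongr
    refine (hstab _ hfr).trans ?_
    gcongr
    have hi1 : (t / a) • A = ∫ y in Ω, ((t / a) * k y) • U y := by
      simp_rw [mul_smul]
      rw [integral_smul]
    rw [hi1]
    refine (biconj_jensen hθ hPW (κ := fun y => t / a * k y)
      (fun y => mul_nonneg hta0 (hk y)) ?_ (hki.integrableOn.const_mul _) ?_ ?_).trans ?_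
    · intro y hy
      exact ball_subset_closedBall (hks y (right_ne_zero_of_mul hy))
    · rw [integral_const_mul]
      rw [div_mul_eq_mul_div, div_le_one ha0, ha]
      nlinarith
    · simp_rw [mul_smul]
      exact hU.smul (t / a)
    · refine add_le_add ?_ ((hess R hR).trans (hP.bdd 0 (by simpa using hθ)))
      have : ∀ y, ENNReal.ofReal (t / a * k y) * W y (U y) =
          ENNReal.ofReal (t / a) * (ENNReal.ofReal (k y) * W y (U y)) := by
        intro y; rw [ENNReal.ofReal_mul hta0, mul_assoc]
      simp_rw [this]
      rw [lintegral_const_mul' _ _ ENNReal.ofReal_ne_top]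
      gcongr
  · have hss : 0 < s := by linarith
    have : s' • G = (s' / s) • (s • G) := by
      rw [smul_smul, div_mul_cancel₀ _ hss.ne']
    rw [this]
    refine hP.shift (by positivity) (by rwa [div_lt_one hss]) _ ?_
    rw [norm_smul, Real.norm_of_nonneg (by positivity), inv_mul_lt_iff₀ h1a0]
    refine lt_of_lt_of_le he ?_
    have : 0 ≤ (1 - s' / s) * θ := by
      refine mul_nonneg ?_ hθ.le
      rw [sub_nonneg, div_le_one hss]; exact hs.le
    gcongr

lemma SR_bound {d : ℕ} {S R C : ℝ} (hS : 0 ≤ S) (hR : 0 < R) (h : S * R ^ d ≤ C) :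
    ENNReal.ofReal S * volume (ball (0 : Euc d) R) ≤
      ENNReal.ofReal C * volume (ball (0 : Euc d) 1) := by
  rw [Measure.addHaar_ball_of_pos _ _ hR, ← mul_assoc, ← ENNReal.ofReal_mul hS]
  gcongr
  simpa using h

lemma approx_conv {d m : ℕ} {Ω : Set (Euc d)} (hΩo : IsOpen Ω) (hΩb : Bornology.IsBounded Ω)
    {p : ℝ} (hp : 1 ≤ p) {v : Euc d → Euc m} {Dv : Euc d → Mat m d}
    (hv : MemW1p0 Ω (ENNReal.ofReal p) v Dv)
    {k : ℕ → Euc d → Euc d → ℝ} {S R : ℕ → ℝ} {V : ℕ → Euc d → Euc m} {κ : ℕ → ℝ} {C : ℝ}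
    (hk : ∀ n, IsAvgKer (k n) (S n) (R n)) (hR : ∀ n, 0 < R n) (hS : ∀ n, 0 ≤ S n)
    (hRt : Tendsto R atTop (𝓝 0)) (hSR : ∀ n, S n * R n ^ d ≤ C)
    (hV : ∀ n, IsCcSmooth Ω (V n)) (hVk : ∀ n x, V n x = ∫ y, k n x y • Ω.indicator v y)
    (hκ : Tendsto κ atTop (𝓝 0))
    (hJ : ∀ n x, ‖smoothJac (V n) x - ∫ y, k n x y • Ω.indicator Dv y‖ ≤ κ n) :
    TendstoW1p Ω (ENNReal.ofReal p) V (fun n => smoothJac (V n)) v Dv := by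
  have hΩv : volume Ω ≠ ⊤ := hΩb.measure_lt_top.ne
  have hvl : MemLp (Ω.indicator v) (ENNReal.ofReal p) volume :=
    (memLp_indicator_iff_restrict hΩo.measurableSet).2 hv.1.1
  have hDl : MemLp (Ω.indicator Dv) (ENNReal.ofReal p) volume :=
    (memLp_indicator_iff_restrict hΩo.measurableSet).2 hv.1.2.1
  have hCt : ENNReal.ofReal C * volume (ball (0 : Euc d) 1) ≠ ⊤ :=
    ENNReal.mul_ne_top ENNReal.ofReal_ne_top measure_ball_lt_top.ne
  have hC := fun n => SR_bound (hS n) (hR n) (hSR n)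
  have t1 := avg_tendsto hΩv hp hvl hk hRt hCt hC
  have t2 := avg_tendsto hΩv hp hDl hk hRt hCt hC
  refine ⟨t1.congr fun n => ?_, ?_⟩
  · refine eLpNorm_congr_ae ?_
    filter_upwards [ae_restrict_mem hΩo.measurableSet] with x hx
    simp [hVk, hx]
  · have hb : ∀ n, eLpNorm (smoothJac (V n) - Dv) (ENNReal.ofReal p) (volume.restrict Ω) ≤
        (volume.restrict Ω) univ ^ (ENNReal.ofReal p).toReal⁻¹ * ENNReal.ofReal (κ n) +
        eLpNorm (fun x => (∫ y, k n x y • Ω.indicator Dv y) - Ω.indicator Dv x) (ENNReal.ofReal p)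
          (volume.restrict Ω) := by
      intro n
      have hJm : AEStronglyMeasurable (smoothJac (V n)) (volume.restrict Ω) :=
        (smoothJac_continuous ((hV n).1.of_le (by norm_cast))).aestronglyMeasurable
      have hPm : AEStronglyMeasurable (fun x => ∫ y, k n x y • Ω.indicator Dv y)
        (volume.restrict Ω) := (avg_measurable (hk n) hDl.1).restrict
      have e : eLpNorm (smoothJac (V n) - Dv) (ENNReal.ofReal p) (volume.restrict Ω) =
          eLpNorm ((fun x => smoothJac (V n) x - ∫ y, k n x y • Ω.indicator Dv y) +
           (fun x => (∫ y, k n x y • Ω.indicator Dv y) - Ω.indicator Dv x)) (ENNReal.ofReal p)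
            (volume.restrict Ω) := by
        refine eLpNorm_congr_ae ?_
        filter_upwards [ae_restrict_mem hΩo.measurableSet] with x hx
        simp [hx]
      rw [e]
      refine (eLpNorm_add_le (hJm.sub hPm) (hPm.sub hDl.1.restrict) (by simpa using hp)).trans ?_
      refine add_le_add ?_ le_rfl
      exact eLpNorm_le_of_ae_bound (Eventually.of_forall fun x => hJ n x)
    refine tendsto_of_tendsto_of_tendsto_of_le_of_le tendsto_const_nhds ?_ (fun _ => zero_le) hb
    have t3 : Tendsto (fun n => ENNReal.ofReal (κ n)) atTop (𝓝 0) := by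
      simpa using ENNReal.tendsto_ofReal hκ
    have hfin : (volume.restrict Ω) univ ^ (ENNReal.ofReal p).toReal⁻¹ ≠ ⊤ :=
      ENNReal.rpow_ne_top_of_nonneg (by positivity) (by simpa using hΩv)
    simpa using (ENNReal.Tendsto.const_mul t3 (Or.inr hfin)).add t2

lemma dom_ev {d m : ℕ} {Ω : Set (Euc d)} (hΩo : IsOpen Ω) (hΩb : Bornology.IsBounded Ω)
    {p : ℝ} (hp : 1 ≤ p) {W : Euc d → Mat m d → ℝ≥0∞} (hstab : StabilityEstimate Ω p W)
    {θ : ℝ} (hθ : 0 < θ) {K0 : Euc d → ℝ≥0∞}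
    (hPW : ∀ᵐ x ∂volume.restrict Ω, PW (W x) θ (K0 x))
    {G : Euc d → Mat m d} (hG : Continuous G) (hGc : HasCompactSupport G)
    {v : Euc d → Euc m} {Dv : Euc d → Mat m d}
    (hv : MemW1p0 Ω (ENNReal.ofReal p) v Dv)
    {k : ℕ → Euc d → Euc d → ℝ} {S R : ℕ → ℝ} {J : ℕ → Euc d → Mat m d} {κ : ℕ → ℝ} {C : ℝ}
    (hk : ∀ n, IsAvgKer (k n) (S n) (R n)) (hR : ∀ n, 0 < R n) (hS : ∀ n, 0 ≤ S n)
    (hRt : Tendsto R atTop (𝓝 0)) (hC0 : 0 ≤ C) (hSR : ∀ n, S n * R n ^ d ≤ C)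
    (hκ : Tendsto κ atTop (𝓝 0))
    (hJ : ∀ n x, ‖J n x - ∫ y, k n x y • Ω.indicator Dv y‖ ≤ κ n)
    {t s : ℝ} (ht : 0 < t) (ht1 : t < 1) (hs : 1 < s) :
    ∃ (CM σ : ℝ) (α : Euc d → ℝ≥0∞), (∫⁻ x in Ω, α x) < ⊤ ∧
      ∀ᶠ n in atTop, ∀ᵐ x ∂volume.restrict Ω,
        W x (G x + t • J n x) ≤ ENNReal.ofReal CM * (ENNReal.ofReal σ *
          (∫⁻ y in Ω, ENNReal.ofReal (k n x y) * W y (G y + Dv y)) + K0 x) + α x +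
            (W x (s • G x) + K0 x) := by
  have hp0 : 0 < p := by linarith
  have hΩm := hΩo.measurableSet
  have hfinm : IsFiniteMeasure (volume.restrict Ω) := ⟨by
    simpa using hΩb.measure_lt_top⟩
  set s' := (1 + s) / 2 with hs'def
  have hs'1 : 1 < s' := by rw [hs'def]; linarith
  have hs's : s' < s := by rw [hs'def]; linarith
  set U : Euc d → Mat m d := fun y => G y + Dv y with hUdef
  have hGl : MemLp G (ENNReal.ofReal p) (volume.restrict Ω) :=
    (hG.memLp_of_hasCompactSupport hGc).restrict _
  have hUl : MemLp (Ω.indicator U) (ENNReal.ofReal p) volume :=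
    (memLp_indicator_iff_restrict hΩm).2 (hGl.add hv.1.2.1)
  set N := (∫⁻ y, ‖Ω.indicator U y‖ₑ ^ p).toReal with hN
  have hNfin : (∫⁻ y, ‖Ω.indicator U y‖ₑ ^ p) ≠ ⊤ := by
    have := lintegral_rpow_enorm_lt_top_of_eLpNorm_lt_top (by simpa using hp0)
      ENNReal.ofReal_ne_top hUl.2
    rw [ENNReal.toReal_ofReal hp0.le] at this
    exact this.ne
  have hN0 : 0 ≤ N := ENNReal.toReal_nonneg
  have hσ0 : 0 < 1 - 1 / s' := by
    rw [sub_pos, div_lt_one (by linarith)]; exact hs'1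
  set M : ℝ := ((m : ℝ) * d + 1) * ((1 - 1 / s')⁻¹ * (C * N) ^ (1 / p)) + 2 with hM
  have hM0 : 0 ≤ ((m : ℝ) * d + 1) * ((1 - 1 / s')⁻¹ * (C * N) ^ (1 / p)) := by positivity
  obtain ⟨CM, δ₀, α, hCM, hδ₀, hα, hst⟩ := hstab M (by linarith)
  refine ⟨CM, (1 - 1 / s')⁻¹, α, hα, ?_⟩
  set τ := (1 - t) / s' * ((1 - s' / s) * θ) with hτ
  have hτ0 : 0 < τ := by
    have : 0 < 1 - s' / s := by rw [sub_pos, div_lt_one (by linarith)]; exact hs's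
    have : 0 < 1 - t := by linarith
    positivity
  have huc : UniformContinuous G := hGc.uniformContinuous_of_continuous hG
  obtain ⟨δ, hδ, hGδ⟩ := Metric.uniformContinuous_iff.1 huc (τ / 2) (by positivity)
  filter_upwards [hκ.eventually_lt_const (by positivity : (0:ℝ) < τ / 2),
    hRt.eventually_lt_const hδ, hRt.eventually_lt_const hδ₀] with n hn1 hn2 hn3
  filter_upwards [hPW, essInf_le_self Ω (fun y => W y 0), ae_restrict_mem hΩm] with x hP hess hx
  have hkx := hk n
  have hDi : Integrable (Ω.indicator Dv) :=
    (integrable_indicator_iff hΩm).2 (hv.1.2.1.integrable (by simpa using hp))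
  have hUi : Integrable (Ω.indicator U) :=
    (integrable_indicator_iff hΩm).2 ((hGl.add hv.1.2.1).integrable (by simpa using hp))
  have hind : ∀ (f : Euc d → Mat m d), (fun y => k n x y • Ω.indicator f y) =
      Ω.indicator (fun y => k n x y • f y) := by
    intro f; ext1 y; by_cases hy : y ∈ Ω <;> simp [hy]
  have hki : Integrable (k n x) := by
    by_contra h
    have := hkx.integral_one x
    rw [integral_undef h] at this
    norm_num at this
  have hkU : IntegrableOn (fun y => k n x y • U y) Ω := by
    rw [← integrable_indicator_iff hΩm, ← hind]
    exact hkx.int_smul hUi.locallyIntegrable x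
  have hkD : IntegrableOn (fun y => k n x y • Dv y) Ω := by
    rw [← integrable_indicator_iff hΩm, ← hind]
    exact hkx.int_smul hDi.locallyIntegrable x
  have hkG : IntegrableOn (fun y => k n x y • G y) Ω :=
    (hkx.int_smul hG.locallyIntegrable x).integrableOn
  have hPe : ∫ y, k n x y • Ω.indicator Dv y = ∫ y in Ω, k n x y • Dv y := by
    rw [hind, integral_indicator hΩm]
  have hAe : ∫ y, k n x y • Ω.indicator U y = ∫ y in Ω, k n x y • U y := by
    rw [hind, integral_indicator hΩm]
  have hJx := hJ n x
  rw [hPe] at hJx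
  refine dom_point hθ hPW (hR n) hP hess (hkx.nonneg x) (hkx.supp x) hki (hkx.integral_one x) U hkU
    (fun ξ hξ => hst (R n) (hR n) hn3 x hx ξ hξ) ht ht1 hs'1 hs's ?_ ?_
  · have hA2 : ∫ y in Ω, k n x y • U y = (∫ y in Ω, k n x y • G y) + ∫ y in Ω, k n x y • Dv y := by
      rw [← integral_add hkG hkD]
      simp only [hUdef, smul_add]
    have hGx : (∫ y in Ω, k n x y) • G x - (∫ y in Ω, k n x y • G y) =
        ∫ y in Ω, k n x y • (G x - G y) := by
      simp_rw [smul_sub]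
      rw [integral_sub (hki.integrableOn.smul_const _) hkG, integral_smul_const]
    have hGx2 : ‖∫ y in Ω, k n x y • (G x - G y)‖ ≤ τ / 2 := by
      calc ‖∫ y in Ω, k n x y • (G x - G y)‖ ≤ ∫ y in Ω, k n x y * (τ / 2) := by
            refine norm_integral_le_of_norm_le (hki.integrableOn.mul_const _)
              (Eventually.of_forall fun y => ?_)
            rw [norm_smul, Real.norm_of_nonneg (hkx.nonneg x y)]
            by_cases h0 : k n x y = 0
            · simp [h0]
            · have h1 := hkx.supp x y h0
              have h2 : dist (G y) (G x) < τ / 2 := hGδ (lt_trans (mem_ball.1 h1) hn2)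
              rw [dist_comm, dist_eq_norm] at h2
              have := hkx.nonneg x y
              gcongr
        _ = (∫ y in Ω, k n x y) * (τ / 2) := integral_mul_const _ _
        _ ≤ 1 * (τ / 2) := by
            gcongr
            rw [← hkx.integral_one x]
            exact setIntegral_le_integral hki (Eventually.of_forall (hkx.nonneg x))
        _ = τ / 2 := one_mul _
    have he : G x + t • J n x - (t • (∫ y in Ω, k n x y • U y) +
        (1 - t * ∫ y in Ω, k n x y) • G x) =
        t • ((J n x - ∫ y in Ω, k n x y • Dv y) + ∫ y in Ω, k n x y • (G x - G y)) := by
      rw [hA2, ← hGx]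
      module
    rw [he, norm_smul, Real.norm_of_nonneg ht.le]
    have h1 := norm_add_le (J n x - ∫ y in Ω, k n x y • Dv y) (∫ y in Ω, k n x y • (G x - G y))
    have h2 : ‖(J n x - ∫ y in Ω, k n x y • Dv y) + ∫ y in Ω, k n x y • (G x - G y)‖ < τ := by
      linarith
    nlinarith [norm_nonneg ((J n x - ∫ y in Ω, k n x y • Dv y) + ∫ y in Ω, k n x y • (G x - G y))]
  · have hsb := hkx.sup_bound hUl.1 hp x
    rw [hAe] at hsb
    have hRd : 0 < R n ^ d := pow_pos (hR n) d
    have hSle : S n ≤ C * R n ^ (-(d : ℝ)) := by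
      rw [Real.rpow_neg (hR n).le, Real.rpow_natCast, ← div_eq_mul_inv, le_div_iff₀ hRd]
      exact hSR n
    have hRn := hR n
    have h1 : ‖∫ y in Ω, k n x y • U y‖ₑ ^ p ≤ ENNReal.ofReal (C * N * R n ^ (-(d : ℝ))) := by
      refine hsb.trans ?_
      calc _ ≤ ENNReal.ofReal (C * R n ^ (-(d : ℝ))) * ENNReal.ofReal N := by
            gcongr
            rw [hN, ENNReal.ofReal_toReal hNfin]
            exact setLIntegral_le_lintegral _ _
        _ = _ := by
            rw [← ENNReal.ofReal_mul (by positivity)]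
            ring_nf
    rw [← ofReal_norm, ENNReal.ofReal_rpow_of_nonneg (norm_nonneg _) hp0.le] at h1
    have h2 := (ENNReal.ofReal_le_ofReal_iff (by positivity)).1 h1
    have h3 := Real.rpow_le_rpow (by positivity) h2 (by positivity : 0 ≤ 1 / p)
    rw [← Real.rpow_mul (norm_nonneg _), mul_one_div_cancel hp0.ne', Real.rpow_one,
      Real.mul_rpow (by positivity) (by positivity), ← Real.rpow_mul hRn.le, mul_one_div] at h3
    have hRp : 0 < R n ^ (-(d : ℝ) / p) := Real.rpow_pos_of_pos hRn _
    calc _ ≤ ((m : ℝ) * d + 1) * ((1 - 1 / s')⁻¹ * ((C * N) ^ (1 / p) * R n ^ (-(d : ℝ) / p))) := by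
          gcongr
      _ = (M - 2) * R n ^ (-(d : ℝ) / p) := by rw [hM]; ring
      _ ≤ _ := by nlinarith

lemma exists_ae_subseq {d : ℕ} {E : Type*} [NormedAddCommGroup E] {μ : Measure (Euc d)} {p : ℝ}
    (hp : 1 ≤ p) {f : ℕ → Euc d → E} {f0 : Euc d → E}
    (hf : ∀ n, AEStronglyMeasurable (f n) μ) (hf0 : AEStronglyMeasurable f0 μ)
    (h : Tendsto (fun n => eLpNorm (f n - f0) (ENNReal.ofReal p) μ) atTop (𝓝 0)) :
    ∃ ns : ℕ → ℕ, StrictMono ns ∧ ∀ᵐ x ∂μ, Tendsto (fun i => f (ns i) x) atTop (𝓝 (f0 x)) :=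
  (tendstoInMeasure_of_tendsto_eLpNorm (by simp; linarith) hf hf0 h).exists_seq_tendsto_ae

lemma W_aemeas {d m : ℕ} {μ : Measure (Euc d)} {W : Euc d → Mat m d → ℝ≥0∞}
    (hW : Measurable (Function.uncurry W)) {U : Euc d → Mat m d} (hU : AEStronglyMeasurable U μ) :
    AEMeasurable (fun x => W x (U x)) μ :=
  hW.comp_aemeasurable (aemeasurable_id.prodMk hU.aemeasurable)

lemma H_eq {d : ℕ} {Ω : Set (Euc d)} (hΩm : MeasurableSet Ω) {k : Euc d → Euc d → ℝ} {S R : ℝ}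
    (hk : IsAvgKer k S R) {F : Euc d → ℝ≥0∞}     (hFt : ∀ᵐ x ∂volume.restrict Ω, F x < ⊤)
    (hFr : Integrable (Ω.indicator fun y => (F y).toReal)) (x : Euc d) :
    ∫⁻ y in Ω, ENNReal.ofReal (k x y) * F y =
      ENNReal.ofReal (∫ y, k x y • Ω.indicator (fun y => (F y).toReal) y) := by
  have hnn : ∀ y, 0 ≤ k x y • Ω.indicator (fun y => (F y).toReal) y := by
    intro y
    refine mul_nonneg (hk.nonneg x y) (indicator_nonneg (fun _ _ => ENNReal.toReal_nonneg) _)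
  rw [ofReal_integral_eq_lintegral_ofReal (hk.int_smul hFr.locallyIntegrable x)
    (Eventually.of_forall hnn)]
  have : (fun y => ENNReal.ofReal (k x y • Ω.indicator (fun y => (F y).toReal) y)) =
      Ω.indicator (fun y => ENNReal.ofReal (k x y * (F y).toReal)) := by
    ext1 y; by_cases hy : y ∈ Ω <;> simp [hy]
  rw [this, lintegral_indicator hΩm]
  refine lintegral_congr_ae ?_
  filter_upwards [hFt] with y hy
  rw [ENNReal.ofReal_mul (hk.nonneg x y), ENNReal.ofReal_toReal hy.ne]

lemma fixed_t {d m : ℕ} {Ω : Set (Euc d)} (hΩo : IsOpen Ω) (hΩb : Bornology.IsBounded Ω)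
    {p : ℝ} (hp : 1 ≤ p) {W : Euc d → Mat m d → ℝ≥0∞}
    (hWm : Measurable (Function.uncurry W)) (hstab : StabilityEstimate Ω p W)
    {θ : ℝ} (hθ : 0 < θ) {K0 : Euc d → ℝ≥0∞} (hK0m : Measurable K0)
    (hK0i : (∫⁻ x in Ω, K0 x) < ⊤)
    (hPW : ∀ᵐ x ∂volume.restrict Ω, PW (W x) θ (K0 x))
    {G : Euc d → Mat m d} (hG : Continuous G) (hGc : HasCompactSupport G)
    {v : Euc d → Euc m} {Dv : Euc d → Mat m d}
    (hv : MemW1p0 Ω (ENNReal.ofReal p) v Dv)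
    (hfin : ∫⁻ x in Ω, W x (G x + Dv x) ≠ ⊤)
    {k : ℕ → Euc d → Euc d → ℝ} {S R : ℕ → ℝ} {J : ℕ → Euc d → Mat m d} {κ : ℕ → ℝ} {C : ℝ}
    (hk : ∀ n, IsAvgKer (k n) (S n) (R n)) (hR : ∀ n, 0 < R n) (hS : ∀ n, 0 ≤ S n)
    (hRt : Tendsto R atTop (𝓝 0)) (hC0 : 0 ≤ C) (hSR : ∀ n, S n * R n ^ d ≤ C)
    (hκ : Tendsto κ atTop (𝓝 0)) (hJc : ∀ n, Continuous (J n))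
    (hJ : ∀ n x, ‖J n x - ∫ y, k n x y • Ω.indicator Dv y‖ ≤ κ n)
    (hJt : Tendsto (fun n => eLpNorm (J n - Dv) (ENNReal.ofReal p) (volume.restrict Ω)) atTop (𝓝 0))
    {t s : ℝ} (ht : 0 < t) (ht1 : t < 1) (hs : 1 < s)
    (hgW : (∫⁻ x in Ω, W x (s • G x)) < ⊤) {η : ℝ≥0∞} (hη : 0 < η) :
    ∃ ns : ℕ → ℕ, StrictMono ns ∧ ∀ᶠ n in atTop, ∫⁻ x in Ω, W x (G x + t • J (ns n) x) ≤
      (∫⁻ x in Ω, (ENNReal.ofReal t * W x (G x + Dv x) +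
        ENNReal.ofReal (1 - t) * (W x (s • G x) + K0 x))) + η := by
  have hΩm := hΩo.measurableSet
  have hΩv : volume Ω ≠ ⊤ := hΩb.measure_lt_top.ne
  obtain ⟨ns, hns, hae⟩ := exists_ae_subseq hp (fun n => (hJc n).aestronglyMeasurable) hv.1.2.1.1 hJt
  refine ⟨ns, hns, ?_⟩
  have hUm : AEStronglyMeasurable (fun x => G x + Dv x) (volume.restrict Ω) :=
    hG.aestronglyMeasurable.add hv.1.2.1.1
  have hFm : AEMeasurable (fun x => W x (G x + Dv x)) (volume.restrict Ω) := W_aemeas hWm hUm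
  have hsGm : AEMeasurable (fun x => W x (s • G x)) (volume.restrict Ω) :=
    W_aemeas hWm (hG.const_smul s).aestronglyMeasurable
  have hgm : ∀ n, AEMeasurable (fun x => W x (G x + t • J n x)) (volume.restrict Ω) := fun n =>
    W_aemeas hWm (hG.add ((hJc n).const_smul t)).aestronglyMeasurable
  have hFt : ∀ᵐ x ∂volume.restrict Ω, W x (G x + Dv x) < ⊤ := ae_lt_top' hFm hfin
  have hFr : Integrable (Ω.indicator fun y => (W y (G y + Dv y)).toReal) :=
    (integrable_indicator_iff hΩm).2 (integrable_toReal_of_lintegral_ne_top hFm hfin)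
  obtain ⟨CM, σ, α, hα, hdom⟩ := dom_ev hΩo hΩb hp hstab hθ hPW hG hGc hv hk hR hS hRt hC0 hSR hκ hJ
    ht ht1 hs
  set F := fun x => W x (G x + Dv x) with hF
  set H : ℕ → Euc d → ℝ≥0∞ := fun n x => ∫⁻ y in Ω, ENNReal.ofReal (k n x y) * F y with hHdef
  have hHe : ∀ n x, H n x = ENNReal.ofReal (∫ y, k n x y • Ω.indicator (fun y => (F y).toReal) y) :=
    fun n x => H_eq hΩm (hk n) hFt hFr x
  have hHm : ∀ n, AEMeasurable (H n) (volume.restrict Ω) := by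
    intro n
    have : H n = fun x => ENNReal.ofReal (∫ y, k n x y • Ω.indicator (fun y => (F y).toReal) y) :=
      funext (hHe n)
    rw [this]
    exact (avg_measurable (hk n) hFr.1).restrict.aemeasurable.ennreal_ofReal
  have hHF : Tendsto (fun n => ∫⁻ x in Ω, (H n x - F x)) atTop (𝓝 0) := by
    have hC := fun n => SR_bound (hS n) (hR n) (hSR n)
    have hCt : ENNReal.ofReal C * volume (ball (0 : Euc d) 1) ≠ ⊤ :=
      ENNReal.mul_ne_top ENNReal.ofReal_ne_top measure_ball_lt_top.ne
    have t1 := avg_tendsto hΩv le_rfl (f := Ω.indicator fun y => (F y).toReal)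
      (by simpa using (memLp_one_iff_integrable.2 hFr)) hk hRt hCt hC
    refine tendsto_of_tendsto_of_tendsto_of_le_of_le tendsto_const_nhds t1 (fun _ => zero_le)
      fun n => ?_
    simp only [ENNReal.ofReal_one, eLpNorm_one_eq_lintegral_enorm]
    refine lintegral_mono_ae ?_
    filter_upwards [hFt, ae_restrict_mem hΩm] with x hx hxΩ
    rw [hHe, tsub_le_iff_right]
    have e1 : F x = ENNReal.ofReal (Ω.indicator (fun y => (F y).toReal) x) := by
      rw [indicator_of_mem hxΩ, ENNReal.ofReal_toReal hx.ne]
    conv_rhs => rw [e1]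
    rw [← ofReal_norm, ← ENNReal.ofReal_add (norm_nonneg _)
      (indicator_nonneg (fun _ _ => ENNReal.toReal_nonneg) _)]
    refine ENNReal.ofReal_le_ofReal ?_
    have := Real.le_norm_self ((∫ y, k n x y • Ω.indicator (fun y => (F y).toReal) y) -
      Ω.indicator (fun y => (F y).toReal) x)
    linarith
  obtain ⟨n0, hn0⟩ := eventually_atTop.1 hdom
  set D : ℝ≥0∞ := ENNReal.ofReal CM * ENNReal.ofReal σ with hD
  set Z : Euc d → ℝ≥0∞ := fun x => ENNReal.ofReal CM * K0 x + (W x (s • G x) + K0 x) with hZ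
  have hZm : AEMeasurable Z (volume.restrict Ω) :=
    (hK0m.aemeasurable.const_mul _).add (hsGm.add hK0m.aemeasurable)
  have hZi : ∫⁻ x in Ω, Z x ≠ ⊤ := by
    have m1 : AEMeasurable (fun x => W x (s • G x) + K0 x) (volume.restrict Ω) :=
      hsGm.add hK0m.aemeasurable
    simp only [hZ]
    rw [lintegral_add_right' _ m1, lintegral_add_left' hsGm,
      lintegral_const_mul' _ _ ENNReal.ofReal_ne_top]
    exact ENNReal.add_ne_top.2 ⟨ENNReal.mul_ne_top ENNReal.ofReal_ne_top hK0i.ne,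
      ENNReal.add_ne_top.2 ⟨hgW.ne, hK0i.ne⟩⟩
  set A : Euc d → ℝ≥0∞ := fun x => ⨆ n, (W x (G x + t • J (n0 + n) x) - (D * H (n0 + n) x + Z x))
    with hA
  have hAm : AEMeasurable A (volume.restrict Ω) :=
    AEMeasurable.iSup fun n => (hgm _).sub (((hHm _).const_mul D).add hZm)
  have hAi : ∫⁻ x in Ω, A x ≠ ⊤ := by
    refine (lt_of_le_of_lt (lintegral_mono_ae ?_) hα).ne
    have := ae_all_iff.2 fun n => hn0 (n0 + n) (by omega)
    filter_upwards [this] with x hx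
    refine iSup_le fun n => ?_
    rw [tsub_le_iff_right]
    refine (hx n).trans (le_of_eq ?_)
    simp only [hD, hZ, hHdef, hF]
    ring
  have hD' : D ≠ ⊤ := ENNReal.mul_ne_top ENNReal.ofReal_ne_top ENNReal.ofReal_ne_top
  refine limit_abs (H := fun n => H (ns n)) (F := F) (Q := fun x => Z x + A x) hD'
    (fun n => hgm (ns n)) (fun n => hHm (ns n)) hFm (hZm.add hAm) ?_ hfin ?_ ?_ ?_
    (hHF.comp hns.tendsto_atTop) hη
  · exact (hFm.const_mul _).add ((hsGm.add hK0m.aemeasurable).const_mul _)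
  · rw [lintegral_add_left' hZm]
    exact ENNReal.add_ne_top.2 ⟨hZi, hAi⟩
  · filter_upwards [hns.tendsto_atTop.eventually_ge_atTop n0] with n hn
    refine Eventually.of_forall fun x => ?_
    obtain ⟨j, hj⟩ := Nat.exists_eq_add_of_le hn
    have : W x (G x + t • J (ns n) x) - (D * H (ns n) x + Z x) ≤ A x := by
      rw [hj]
      exact le_iSup (fun n => (W x (G x + t • J (n0 + n) x) - (D * H (n0 + n) x + Z x))) j
    rw [tsub_le_iff_left] at this
    rwa [← add_assoc]
  · filter_upwards [hae, hPW] with x hx hP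
    have h1t : 0 < 1 - t := by linarith
    have hs0 : 0 < s := by linarith
    have hth : 0 < (1 - 1 / s) * θ := by
      refine mul_pos ?_ hθ
      rw [sub_pos, div_lt_one hs0]; exact hs
    have hte : Tendsto (fun i => ‖(t / (1 - t)) • (J (ns i) x - Dv x)‖) atTop (𝓝 0) := by
      have := ((hx.sub_const (Dv x)).const_smul (t / (1 - t))).norm
      simpa using this
    filter_upwards [hte.eventually_lt_const hth] with i hi
    have e1 : G x + t • J (ns i) x = t • (G x + Dv x) +
        (1 - t) • ((1 / s) • (s • G x) + (t / (1 - t)) • (J (ns i) x - Dv x)) := by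
      have q1 : (1 / s) • (s • G x) = G x := by
        rw [smul_smul, one_div_mul_cancel hs0.ne', one_smul]
      have q2 : (1 - t) • ((t / (1 - t)) • (J (ns i) x - Dv x)) = t • (J (ns i) x - Dv x) := by
        rw [smul_smul, mul_div_cancel₀ _ h1t.ne']
      rw [q1, smul_add (1 - t), q2]
      module
    rw [e1]
    refine (hP.conv _ _ t ht.le ht1.le).trans ?_
    gcongr
    exact hP.shift (by positivity) (by rwa [div_lt_one hs0]) _ hi

lemma exists_t {Z η : ℝ≥0∞} (hZ : Z ≠ ⊤) (hη : 0 < η) :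
    ∃ t : ℝ, 0 < t ∧ t < 1 ∧ ENNReal.ofReal (1 - t) * Z ≤ η := by
  have h1 : Tendsto (fun t : ℝ => 1 - t) (𝓝[<] 1) (𝓝 0) := by
    have : Tendsto (fun t : ℝ => 1 - t) (𝓝 1) (𝓝 (1 - 1)) := tendsto_const_nhds.sub tendsto_id
    simpa using this.mono_left nhdsWithin_le_nhds
  have h2 : Tendsto (fun t : ℝ => ENNReal.ofReal (1 - t) * Z) (𝓝[<] 1) (𝓝 0) := by
    have := ENNReal.Tendsto.mul_const (ENNReal.tendsto_ofReal h1) (b := Z) (Or.inr hZ)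
    simpa using this
  have h3 : ∀ᶠ t : ℝ in 𝓝[<] 1, 0 < t :=
    nhdsWithin_le_nhds (lt_mem_nhds zero_lt_one)
  obtain ⟨t, a, b, c⟩ := ((h2.eventually_lt_const hη).and
    (h3.and (eventually_mem_nhdsWithin (a := (1 : ℝ)) (s := Iio 1)))).exists
  exact ⟨t, b, c, a.le⟩

lemma eLpNorm_smul_sub {d : ℕ} {E : Type*} [NormedAddCommGroup E] [NormedSpace ℝ E]
    {μ : Measure (Euc d)} {p : ℝ≥0∞} (hp : 1 ≤ p) {a b : Euc d → E}
    (ha : AEStronglyMeasurable a μ) (hb : AEStronglyMeasurable b μ) {t : ℝ} (ht : 0 < t)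
    (ht1 : t < 1) : eLpNorm (t • a - b) p μ ≤
      eLpNorm (a - b) p μ + ENNReal.ofReal (1 - t) * eLpNorm b p μ := by
  have e : t • a - b = t • (a - b) + (t - 1) • b := by module
  rw [e]
  refine (eLpNorm_add_le ((ha.sub hb).const_smul t) (hb.const_smul _) hp).trans ?_
  rw [eLpNorm_const_smul, eLpNorm_const_smul]
  refine add_le_add ?_ ?_
  · refine mul_le_of_le_one_left' ?_
    rw [← ofReal_norm, Real.norm_of_nonneg ht.le]
    exact ENNReal.ofReal_le_one.2 ht1.le
  · rw [← ofReal_norm, Real.norm_of_nonpos (by linarith), neg_sub]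

lemma smoothJac_smul {d m : ℕ} {V : Euc d → Euc m} (hV : ContDiff ℝ 1 V) (t : ℝ) :
    smoothJac (t • V) = t • smoothJac V := by
  ext x i j
  have := (hV.differentiable (by norm_num) x)
  simp [smoothJac, fderiv_const_smul this t]

lemma IsCcSmooth.smul {d m : ℕ} {Ω : Set (Euc d)} {V : Euc d → Euc m} (hV : IsCcSmooth Ω V)
    (t : ℝ) : IsCcSmooth Ω (t • V) := by
  have hsub : tsupport (t • V) ⊆ tsupport V := by
    refine closure_mono fun x hx => ?_
    rw [Function.mem_support] at hx ⊢
    intro h0; exact hx (by simp [h0])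
  exact ⟨hV.1.const_smul t, hV.2.1.mono' (subset_closure.trans hsub), hsub.trans hV.2.2⟩

lemma IsCcSmooth.c1 {d m : ℕ} {Ω : Set (Euc d)} {V : Euc d → Euc m} (hV : IsCcSmooth Ω V) :
    ContDiff ℝ 1 V := hV.1.of_le (by exact_mod_cast le_top)

lemma finite_case {d m : ℕ} {Ω : Set (Euc d)} (hΩo : IsOpen Ω) (hΩb : Bornology.IsBounded Ω)
    (hΩl : HasLipschitzBoundary Ω)
    {p : ℝ} (hp : 1 ≤ p) (hpd : (d : ℝ) - 1 < p) {W : Euc d → Mat m d → ℝ≥0∞}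
    (hW : Assumption1 Ω p W)
    {G : Euc d → Mat m d} (hG : Continuous G) (hGc : HasCompactSupport G)
    {s : ℝ} (hs : 1 < s) (hgW : (∫⁻ x in Ω, W x (s • G x)) < ⊤)
    {v : Euc d → Euc m} {Dv : Euc d → Mat m d}
    (hv : MemW1p0 Ω (ENNReal.ofReal p) v Dv)
    (hfin : ∫⁻ x in Ω, W x (G x + Dv x) ≠ ⊤) {η : ℝ≥0∞} (hη : 0 < η) :
    ∃ φ : Euc d → Euc m, IsCcSmooth Ω φ ∧
      eLpNorm (φ - v) (ENNReal.ofReal p) (volume.restrict Ω) ≤ η ∧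
      eLpNorm (smoothJac φ - Dv) (ENNReal.ofReal p) (volume.restrict Ω) ≤ η ∧
      ∫⁻ x in Ω, W x (G x + smoothJac φ x) ≤ (∫⁻ x in Ω, W x (G x + Dv x)) + η := by
  have hWm := hW.1
  have hstab := hW.2.2.2.2
  obtain ⟨k, S, R, V, κ, C, hk, hR, hS, hRt, hC0, hSR, hV, hVk, hκ, hJ⟩ :=
    approx_seq hΩo hΩb hΩl hp hpd hv
  obtain ⟨θ, K0, hθ, hK0m, hK0i, hPW⟩ := exists_K0 hpd hW
  have hT := approx_conv hΩo hΩb hp hv hk hR hS hRt hSR hV hVk hκ hJ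
  set Z : ℝ≥0∞ := eLpNorm v (ENNReal.ofReal p) (volume.restrict Ω) +
    (eLpNorm Dv (ENNReal.ofReal p) (volume.restrict Ω) +
      ((∫⁻ x in Ω, W x (s • G x)) + ∫⁻ x in Ω, K0 x)) with hZ
  have hZt : Z ≠ ⊤ := by
    simp only [hZ, ENNReal.add_ne_top]
    exact ⟨hv.1.1.2.ne, hv.1.2.1.2.ne, hgW.ne, hK0i.ne⟩
  have hη2 : 0 < η / 2 := ENNReal.half_pos hη.ne'
  have h1p : (1 : ℝ≥0∞) ≤ ENNReal.ofReal p := by simpa using ENNReal.ofReal_le_ofReal hp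
  obtain ⟨t, ht, ht1, htZ⟩ := exists_t hZt hη2
  obtain ⟨ns, hns, hev⟩ := fixed_t hΩo hΩb hp hWm hstab hθ hK0m hK0i hPW hG hGc hv hfin hk hR hS
    hRt hC0 hSR hκ (fun n => smoothJac_continuous (hV n).c1) hJ hT.2 ht ht1 hs hgW hη2
  have a1 := (hT.1.comp hns.tendsto_atTop).eventually_lt_const hη2
  have a2 := (hT.2.comp hns.tendsto_atTop).eventually_lt_const hη2
  obtain ⟨n, b1, b2, b3⟩ := (a1.and (a2.and hev)).exists
  have hsGm : AEMeasurable (fun x => W x (s • G x)) (volume.restrict Ω) :=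
    W_aemeas hWm (hG.const_smul s).aestronglyMeasurable
  have hFm : AEMeasurable (fun x => W x (G x + Dv x)) (volume.restrict Ω) :=
    W_aemeas hWm (hG.aestronglyMeasurable.add hv.1.2.1.1)
  refine ⟨t • V (ns n), (hV _).smul t, ?_, ?_, ?_⟩
  · refine (eLpNorm_smul_sub h1p (hV _).c1.continuous.aestronglyMeasurable hv.1.1.1 ht
      ht1).trans ?_
    rw [← ENNReal.add_halves η]
    refine add_le_add b1.le (le_trans ?_ htZ)
    gcongr
    exact le_self_add
  · rw [smoothJac_smul (hV _).c1]
    refine (eLpNorm_smul_sub h1p (smoothJac_continuous (hV _).c1).aestronglyMeasurable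
      hv.1.2.1.1 ht ht1).trans ?_
    rw [← ENNReal.add_halves η]
    refine add_le_add b2.le (le_trans ?_ htZ)
    gcongr
    exact le_trans le_self_add le_add_self
  · rw [smoothJac_smul (hV _).c1]
    refine b3.trans ?_
    rw [← ENNReal.add_halves η, ← add_assoc, lintegral_add_left' (hFm.const_mul _),
      lintegral_const_mul' _ _ ENNReal.ofReal_ne_top, lintegral_const_mul' _ _ ENNReal.ofReal_ne_top,
      lintegral_add_left' hsGm]
    rw [ENNReal.add_halves η]
    refine add_le_add (add_le_add ?_ (le_trans ?_ htZ)) le_rfl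
    · exact mul_le_of_le_one_left' (ENNReal.ofReal_le_one.2 ht1.le)
    · gcongr
      exact le_trans le_add_self le_add_self

lemma lsc_case {d m : ℕ} {Ω : Set (Euc d)} {p : ℝ} (hp : 1 ≤ p) {W : Euc d → Mat m d → ℝ≥0∞}
    (hW : Assumption1 Ω p W) {G : Euc d → Mat m d} (hG : Continuous G)
    {v : Euc d → Euc m} {Dv : Euc d → Mat m d} (hv : MemW1p0 Ω (ENNReal.ofReal p) v Dv)
    {φ : ℕ → Euc d → Euc m} (hφ : ∀ n, IsCcSmooth Ω (φ n))
    (hT : TendstoW1p Ω (ENNReal.ofReal p) φ (fun n => smoothJac (φ n)) v Dv)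
    {c : ℝ≥0∞} (hc : c < ∫⁻ x in Ω, W x (G x + Dv x)) :
    ∀ᶠ n in atTop, c < ∫⁻ x in Ω, W x (G x + smoothJac (φ n) x) := by
  by_contra hcon
  rw [not_eventually] at hcon
  obtain ⟨ms, hms, hle⟩ := extraction_of_frequently_atTop hcon
  obtain ⟨ns, hns, hae⟩ := exists_ae_subseq hp
    (fun n => (smoothJac_continuous (hφ (ms n)).c1).aestronglyMeasurable) hv.1.2.1.1
    (hT.2.comp hms.tendsto_atTop)
  refine absurd hc (not_lt.2 ?_)
  have hm : ∀ n, AEMeasurable (fun x => W x (G x + smoothJac (φ (ms (ns n))) x))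
      (volume.restrict Ω) := fun n => W_aemeas hW.1
    (hG.add (smoothJac_continuous (hφ _).c1)).aestronglyMeasurable
  calc ∫⁻ x in Ω, W x (G x + Dv x)
      ≤ ∫⁻ x in Ω, liminf (fun n => W x (G x + smoothJac (φ (ms (ns n))) x)) atTop := by
        refine lintegral_mono_ae ?_
        filter_upwards [hae, hW.2.1] with x hx hP
        exact (hP.2.le_liminf (G x + Dv x)).trans
          (liminf_le_liminf_of_le (hx.const_add (G x)))
    _ ≤ liminf (fun n => ∫⁻ x in Ω, W x (G x + smoothJac (φ (ms (ns n))) x)) atTop :=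
        lintegral_liminf_le' hm
    _ ≤ c := by
        refine liminf_le_of_frequently_le' (Eventually.of_forall fun n => ?_).frequently
        exact not_lt.1 (hle (ns n))

/-- **Theorem 2.4.** Let `Ω ⊂ ℝ^d` be a bounded open set with Lipschitz
boundary, `p > d−1`, and let `W : Ω × ℝ^{m×d} → [0,+∞]` satisfy Assumption 1. Let
`g ∈ C_c^1(ℝ^d)^m` satisfy `∫_Ω W(x, s Dg) dx < ∞` for some `s > 1`. Then every
`u = g + v ∈ g + W_0^{1,p}(Ω)^m` can be approximated by `u_n = g + φ_n ∈ g + C_c^∞(Ω)^m`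
strongly in `W^{1,p}` with convergence of the energies; in particular the infima of the
energy over `g + W_0^{1,p}(Ω)^m` and over `g + C_c^∞(Ω)^m` coincide. -/
theorem no_lavrentiev_gap_high_exponent
    (d m : ℕ) (Ω : Set (Euc d)) (hΩo : IsOpen Ω) (hΩb : Bornology.IsBounded Ω)
    (hΩl : HasLipschitzBoundary Ω)
    (p : ℝ) (hp1 : 1 ≤ p) (hpd : (d : ℝ) - 1 < p)
    (W : Euc d → Mat m d → ℝ≥0∞)
    (hW : Assumption1 Ω p W)
    (g : Euc d → Euc m) (hg1 : ContDiff ℝ 1 g) (hgc : HasCompactSupport g)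
    (hgW : ∃ s : ℝ, 1 < s ∧ (∫⁻ x in Ω, W x (s • smoothJac g x)) < ⊤) :
    (∀ (v : Euc d → Euc m) (Dv : Euc d → Mat m d),
        MemW1p0 Ω (ENNReal.ofReal p) v Dv →
        ∃ φ : ℕ → Euc d → Euc m, (∀ n, IsCcSmooth Ω (φ n)) ∧
          TendstoW1p Ω (ENNReal.ofReal p) φ (fun n => smoothJac (φ n)) v Dv ∧
          Tendsto (fun n => ∫⁻ x in Ω, W x (smoothJac g x + smoothJac (φ n) x)) atTop
            (𝓝 (∫⁻ x in Ω, W x (smoothJac g x + Dv x)))) ∧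
    sInf {e : ℝ≥0∞ | ∃ (v : Euc d → Euc m) (Dv : Euc d → Mat m d),
        MemW1p0 Ω (ENNReal.ofReal p) v Dv ∧
        e = ∫⁻ x in Ω, W x (smoothJac g x + Dv x)} =
      sInf {e : ℝ≥0∞ | ∃ φ : Euc d → Euc m, IsCcSmooth Ω φ ∧
        e = ∫⁻ x in Ω, W x (smoothJac g x + smoothJac φ x)} := by
  obtain ⟨s, hs, hsW⟩ := hgW
  have hG := smoothJac_continuous hg1
  have hGc := smoothJac_hasCompactSupport hgc
  have key : ∀ (v : Euc d → Euc m) (Dv : Euc d → Mat m d),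
        MemW1p0 Ω (ENNReal.ofReal p) v Dv →
        ∃ φ : ℕ → Euc d → Euc m, (∀ n, IsCcSmooth Ω (φ n)) ∧
          TendstoW1p Ω (ENNReal.ofReal p) φ (fun n => smoothJac (φ n)) v Dv ∧
          Tendsto (fun n => ∫⁻ x in Ω, W x (smoothJac g x + smoothJac (φ n) x)) atTop
            (𝓝 (∫⁻ x in Ω, W x (smoothJac g x + Dv x))) := by
    intro v Dv hv
    by_cases hfin : ∫⁻ x in Ω, W x (smoothJac g x + Dv x) = ⊤
    · obtain ⟨w, hw, hT⟩ := hv.2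
      refine ⟨w, hw, hT, tendsto_order.2 ⟨fun c hc => lsc_case hp1 hW hG hv hw hT hc, ?_⟩⟩
      intro c hc
      rw [hfin] at hc
      exact absurd hc not_top_lt
    · have hpos : ∀ n : ℕ, 0 < ((n : ℝ≥0∞))⁻¹ := fun n =>
        ENNReal.inv_pos.2 (ENNReal.natCast_ne_top n)
      choose φ h1 h2 h3 h4 using fun n =>
        finite_case hΩo hΩb hΩl hp1 hpd hW hG hGc hs hsW hv hfin (hpos n)
      have h0 := ENNReal.tendsto_inv_nat_nhds_zero
      have hT : TendstoW1p Ω (ENNReal.ofReal p) φ (fun n => smoothJac (φ n)) v Dv :=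
        ⟨tendsto_of_tendsto_of_tendsto_of_le_of_le tendsto_const_nhds h0 (fun _ => zero_le) h2,
          tendsto_of_tendsto_of_tendsto_of_le_of_le tendsto_const_nhds h0 (fun _ => zero_le) h3⟩
      refine ⟨φ, h1, hT, tendsto_order.2 ⟨fun c hc => lsc_case hp1 hW hG hv h1 hT hc, ?_⟩⟩
      intro c hc
      have h5 : Tendsto (fun n : ℕ => (∫⁻ x in Ω, W x (smoothJac g x + Dv x)) +
          ((n : ℝ≥0∞))⁻¹) atTop (𝓝 (∫⁻ x in Ω, W x (smoothJac g x + Dv x))) := by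
        simpa using h0.const_add (∫⁻ x in Ω, W x (smoothJac g x + Dv x))
      filter_upwards [h5.eventually_lt_const hc] with n hn
      exact (h4 n).trans_lt hn
  refine ⟨key, le_antisymm (sInf_le_sInf ?_) (le_sInf ?_)⟩
  · rintro e ⟨φ, hφ, rfl⟩
    exact ⟨φ, smoothJac φ, isCcSmooth_memW1p0 hφ, rfl⟩
  · rintro e ⟨v, Dv, hv, rfl⟩
    obtain ⟨φ, hφ, -, hE⟩ := key v Dv hv
    exact ge_of_tendsto' hE fun n => sInf_le ⟨φ n, hφ n, rfl⟩

end
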